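/- arXiv:1507.02736 — 5 statements merged into one kernel-verified Lean document; each statement's English description precedes it below -/
import Mathlib

section
/- For integers 1 < d < D − 1 and a real a with 0 ≤ a ≤ d²/D² and d/D + √a ≤ 1, define I(d,D,a) = ((D−1)!/((d−1)!·(D−d−1)!)) · ∫_{[0, d/D − √a] ∪ [d/D + √a, 1]} u^{d−1}·(1−u)^{D−d−1} du, and let θ = 11/12. Then there exists a constant C > 4 such that: for all integers d ≥ 1, D and reals a ≥ 0 with C·log D < d < D/C and 1/D < √a < d/(8D), one has I(d,D,a) < (D/√d)·e^{−θ·a·D²/(2d)}. -/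
open MeasureTheory

noncomputable section

/-- The incomplete-Beta-type quantity I(d,D,a). -/
def Ifun (d D : ℕ) (a : ℝ) : ℝ :=
  (Nat.factorial (D - 1) : ℝ) / (Nat.factorial (d - 1) * Nat.factorial (D - d - 1)) *
    ∫ u in Set.Icc (0:ℝ) ((d : ℝ) / D - Real.sqrt a) ∪ Set.Icc ((d : ℝ) / D + Real.sqrt a) 1,
      u ^ (d - 1) * (1 - u) ^ (D - d - 1)

set_option maxHeartbeats 2000000

theorem fact_upper (n : ℕ) :
    ((n+1).factorial : ℝ) * Real.exp 1 ^ (n+1) ≤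
      Real.exp 1 * Real.sqrt ((n+1 : ℕ) : ℝ) * ((n+1 : ℕ) : ℝ) ^ (n+1) := by
  have h := Stirling.stirlingSeq'_antitone (Nat.zero_le n)
  simp only [Function.comp, Nat.succ_eq_add_one, zero_add, Stirling.stirlingSeq_one] at h
  unfold Stirling.stirlingSeq at h
  rw [div_le_div_iff₀ (by positivity) (by positivity), Real.sqrt_mul (by norm_num), div_pow] at h
  have h2 : (0:ℝ) < Real.sqrt 2 := by positivity
  have hE : (0:ℝ) < Real.exp 1 ^ (n+1) := by positivity
  have h3 : Real.exp 1 * (√2 * √((n+1:ℕ):ℝ) * (((n+1:ℕ):ℝ) ^ (n + 1) / Real.exp 1 ^ (n + 1)))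
      = √2 * ((Real.exp 1 * √((n+1:ℕ):ℝ) * ((n+1:ℕ):ℝ) ^ (n + 1)) / Real.exp 1 ^ (n + 1)) := by
    ring
  rw [h3, mul_comm] at h
  have h4 := le_of_mul_le_mul_left h h2
  rwa [le_div_iff₀ hE] at h4

theorem fact_lower (n : ℕ) :
    Real.sqrt (2 * Real.pi) * Real.sqrt (n : ℝ) * (n:ℝ) ^ n ≤ (n.factorial : ℝ) * Real.exp 1 ^ n := by
  have h := Stirling.le_factorial_stirling n
  rw [Real.sqrt_mul (by positivity), div_pow, ← mul_div_assoc, div_le_iff₀ (by positivity)] at h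
  exact h

theorem coeff_bound (m n : ℕ) :
    ((m+n+1).factorial : ℝ) / (m.factorial * n.factorial) *
      (((m:ℝ)+1)/(m+n+2)) ^ (m+1) * (((n:ℝ)+1)/(m+n+2)) ^ (n+1) ≤ 1/2 * Real.sqrt ((m:ℝ)+1) := by
  have h1 := fact_upper (m+n+1)
  have h2 := fact_lower (m+1)
  have h3 := fact_lower (n+1)
  have e1 : ((m+n+1+1 : ℕ) : ℝ) = (m:ℝ)+n+2 := by push_cast; ring
  rw [Nat.factorial_succ, Nat.cast_mul, e1] at h1
  rw [Nat.factorial_succ, Nat.cast_mul] at h2 h3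
  simp only [Nat.cast_add, Nat.cast_one] at h2 h3
  have hs : √(2 * Real.pi) * √(2 * Real.pi) = 2 * Real.pi := Real.mul_self_sqrt (by positivity)
  have hEpi : Real.exp 1 ≤ Real.pi := by
    have := Real.exp_one_lt_d9; have := Real.pi_gt_three; linarith
  have hd0 : (0:ℝ) < (m:ℝ)+1 := by positivity
  have he0 : (0:ℝ) < (n:ℝ)+1 := by positivity
  have hD0 : (0:ℝ) < (m:ℝ)+n+2 := by positivity
  have hle : √((n:ℝ)+1) ≤ √((m:ℝ)+n+2) := Real.sqrt_le_sqrt (by linarith)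
  have sd : √((m:ℝ)+1) * √((m:ℝ)+1) = (m:ℝ)+1 := Real.mul_self_sqrt hd0.le
  have se : √((n:ℝ)+1) * √((n:ℝ)+1) = (n:ℝ)+1 := Real.mul_self_sqrt he0.le
  have sD : √((m:ℝ)+n+2) * √((m:ℝ)+n+2) = (m:ℝ)+n+2 := Real.mul_self_sqrt hD0.le
  have pd : 0 < √((m:ℝ)+1) := by positivity
  have pe : 0 < √((n:ℝ)+1) := by positivity
  have pD : 0 < √((m:ℝ)+n+2) := by positivity
  have pE : 0 < Real.exp 1 := Real.exp_pos 1
  have pm : (0:ℝ) < m.factorial := by positivity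
  have pn : (0:ℝ) < n.factorial := by positivity
  have pF : (0:ℝ) < (m+n+1).factorial := by positivity
  rw [div_pow, div_pow]
  set d : ℝ := (m:ℝ)+1
  set e : ℝ := (n:ℝ)+1
  set D : ℝ := (m:ℝ)+n+2
  set A : ℝ := d ^ (m+1) with hA
  set B : ℝ := e ^ (n+1) with hB
  have pA : 0 < A := by positivity
  have pB : 0 < B := by positivity
  have hDD : D ^ (m+n+1+1) = D^(m+1) * D^(n+1) := by rw [← pow_add]; congr 1; ring
  have hEE : Real.exp 1 ^ (m+n+1+1) = Real.exp 1^(m+1) * Real.exp 1^(n+1) := by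
    rw [← pow_add]; congr 1; ring
  rw [hDD, hEE] at h1
  set P : ℝ := D^(m+1)
  set Q : ℝ := D^(n+1)
  set X : ℝ := Real.exp 1^(m+1)
  set Y : ℝ := Real.exp 1^(n+1)
  have pP : 0 < P := by positivity
  have pQ : 0 < Q := by positivity
  have pX : 0 < X := by positivity
  have pY : 0 < Y := by positivity
  set F : ℝ := ((m+n+1).factorial : ℝ)
  set M : ℝ := (m.factorial : ℝ)
  set N : ℝ := (n.factorial : ℝ)
  have h23 := mul_le_mul h2 h3 (by positivity) (by positivity)
  have h123 := mul_le_mul h1 h23 (by positivity) (by positivity)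
  have key : F * A * B ≤ 1/2 * √d * (P * Q * M * N) := by
    have c : 0 < √D * √D * √d * √e * X * Y * (2 * Real.pi) := by positivity
    refine le_of_mul_le_mul_left ?_ c
    calc √D * √D * √d * √e * X * Y * (2 * Real.pi) * (F * A * B)
        = (D * F * (X*Y)) * ((√(2 * Real.pi) * √d * A) * (√(2 * Real.pi) * √e * B)) := by
          linear_combination (√d*√e*X*Y*F*A*B*(2*Real.pi))*sD - D*(√d*√e*X*Y*F*A*B)*hs
      _ ≤ Real.exp 1 * √D * (P*Q) * (d * M * X * (e * N * Y)) := h123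
      _ = (√D * √d * √d * X * Y * P * Q * M * N * √e) * (Real.exp 1 * √e) := by
          linear_combination -(Real.exp 1*√D*P*Q*M*X*N*Y*e)*sd - (Real.exp 1*√D*P*Q*M*X*N*Y*√d*√d)*se
      _ ≤ (√D * √d * √d * X * Y * P * Q * M * N * √e) * (Real.pi * √D) := by
          gcongr
      _ = _ := by ring
  have : F / (M * N) * (A / P) * (B / Q) = F * A * B / (P * Q * M * N) := by
    field_simp
  rw [this, div_le_iff₀ (by positivity)]
  exact key

theorem one_add_le (s : ℝ) (hs : |s| ≤ 1/8) : 1 + s ≤ Real.exp (s - 11/24 * s^2) := by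
  have h := Real.abs_log_sub_add_sum_range_le (x := -s) (by rw [abs_neg]; linarith) 4
  have hb := abs_le.1 hs
  have hpos : 0 < 1 + s := by linarith [hb.1]
  rw [← Real.log_le_iff_le_exp hpos]
  simp only [Finset.sum_range_succ, Finset.sum_range_zero, abs_neg, sub_neg_eq_add] at h
  have h1 := (abs_le.1 h).2
  have h2 : |s| ^ (4+1) / (1 - |s|) ≤ s^4 / 7 := by
    rw [div_le_iff₀ (by linarith)]
    have e : |s|^(4+1) = s^4 * |s| := by
      rw [pow_succ, ← abs_pow, abs_of_nonneg (by positivity)]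
    rw [e]
    have : (0:ℝ) ≤ s^4 := by positivity
    nlinarith
  have h3 : s^3 ≤ s^2 * (1/8) := by nlinarith [sq_nonneg s, hb.2]
  have h4 : (0:ℝ) ≤ s^4 := by positivity
  norm_num at h1 h2
  nlinarith

theorem one_add_pow_le (y : ℝ) (hy : 0 ≤ 1 + y) (n : ℕ) : (1+y)^n ≤ Real.exp (n * y) := by
  rw [Real.exp_nat_mul]
  exact pow_le_pow_left₀ hy (by linarith [Real.add_one_le_exp y]) n

theorem mono_bound (m n : ℕ) (x u : ℝ) (hx0 : 0 < x) (hx1 : x < 1) (hu0 : 0 ≤ u) (hu1 : u ≤ 1)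
    (h : (u - x) * (m * (1 - x) - n * x) ≤ 0) :
    u^m * (1-u)^n ≤ x^m * (1-x)^n := by
  have h1x : 0 < 1 - x := by linarith
  have a1 : u = x * (1 + (u-x)/x) := by field_simp; ring
  have a2 : 1 - u = (1-x) * (1 + -(u-x)/(1-x)) := by field_simp; ring
  have p1 : 0 ≤ 1 + (u-x)/x := by
    have : 1 + (u-x)/x = u / x := by field_simp; ring
    rw [this]; positivity
  have p2 : 0 ≤ 1 + -(u-x)/(1-x) := by
    have : 1 + -(u-x)/(1-x) = (1-u) / (1-x) := by field_simp; ring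
    rw [this]; exact div_nonneg (by linarith) h1x.le
  have b1 := one_add_pow_le _ p1 m
  have b2 := one_add_pow_le _ p2 n
  have b := mul_le_mul b1 b2 (by positivity) (by positivity)
  rw [← Real.exp_add] at b
  have hexp : (m:ℝ) * ((u-x)/x) + n * (-(u-x)/(1-x)) ≤ 0 := by
    have : (m:ℝ) * ((u-x)/x) + n * (-(u-x)/(1-x))
      = ((u - x) * (m * (1 - x) - n * x)) / (x * (1-x)) := by field_simp; ring
    rw [this]; exact div_nonpos_of_nonpos_of_nonneg h (by positivity)
  have b3 := b.trans (Real.exp_le_one_iff.2 hexp)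
  calc u^m * (1-u)^n = (x^m*(1-x)^n) * ((1 + (u-x)/x)^m * (1 + -(u-x)/(1-x))^n) := by
        conv_lhs => rw [a2]
        conv_lhs => lhs; rw [a1]
        rw [mul_pow, mul_pow]; ring
    _ ≤ (x^m*(1-x)^n) * 1 := by gcongr
    _ = _ := by ring

/-- Value at the end point. -/
theorem end_bound (m n : ℕ) (s p q x : ℝ) (hs : |s| ≤ 1/8) (hp : p = ((m:ℝ)+1)/(m+n+2))
    (hq : q = ((n:ℝ)+1)/(m+n+2)) (hx : x = p * (1+s)) (hx1 : x < 1) :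
    x^(m+1) * (1-x)^(n+1) ≤ p^(m+1) * q^(n+1) * Real.exp (-(11/24 * ((m:ℝ)+1) * s^2)) := by
  have hb := abs_le.1 hs
  have hp0 : 0 < p := by rw [hp]; positivity
  have hq0 : 0 < q := by rw [hq]; positivity
  have hpq : p + q = 1 := by rw [hp, hq]; field_simp; ring
  have hnp : ((n:ℝ)+1) * p = ((m:ℝ)+1) * q := by rw [hp, hq]; field_simp
  have a2 : 1 - x = q * (1 + -(p*s)/q) := by
    rw [hx]; field_simp; linarith
  have p2 : 0 ≤ 1 + -(p*s)/q := by
    by_contra hc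
    push Not at hc
    nlinarith
  have b2 := one_add_pow_le _ p2 (n+1)
  have b1 : (1+s)^(m+1) ≤ Real.exp ((m+1:ℕ) * (s - 11/24*s^2)) := by
    rw [Real.exp_nat_mul]
    exact pow_le_pow_left₀ (by linarith [hb.1]) (one_add_le s hs) _
  have b := mul_le_mul b1 b2 (by positivity) (by positivity)
  rw [← Real.exp_add] at b
  have he : ((m+1:ℕ):ℝ) * (s - 11/24*s^2) + ((n+1:ℕ):ℝ) * (-(p*s)/q)
      = -(11/24 * ((m:ℝ)+1) * s^2) := by
    have : ((n+1:ℕ):ℝ) * (-(p*s)/q) = -(((n:ℝ)+1) * p) * s / q := by push_cast; ring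
    rw [this, hnp]; push_cast; field_simp; ring
  rw [he] at b
  calc x^(m+1) * (1-x)^(n+1) = p^(m+1) * q^(n+1) * ((1+s)^(m+1) * (1 + -(p*s)/q)^(n+1)) := by
        rw [a2, hx, mul_pow, mul_pow]; ring
    _ ≤ _ := by gcongr

theorem tail_bound (m n : ℕ) (s p x u : ℝ) (hs : |s| ≤ 1/8) (hs1 : 1 < ((m:ℝ)+1) * |s|)
    (hp : p = ((m:ℝ)+1)/(m+n+2)) (hp1 : p < 1/100) (hx : x = p * (1+s))
    (hu0 : 0 ≤ u) (hu1 : u ≤ 1) (hus : 0 ≤ (u - x) * s) :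
    ((m+n+1).factorial : ℝ) / (m.factorial * n.factorial) * (u^m * (1-u)^n) * (x * (1 - x)) ≤
      1/2 * Real.sqrt ((m:ℝ)+1) * Real.exp (-(11/24 * ((m:ℝ)+1) * s^2)) := by
  have hb := abs_le.1 hs
  have hp0 : 0 < p := by rw [hp]; positivity
  have hx0 : 0 < x := by rw [hx]; exact mul_pos hp0 (by linarith [hb.1])
  have hx1 : x < 1 := by rw [hx]; nlinarith [hb.2]
  have hD : p * ((m:ℝ)+n+2) = m+1 := by rw [hp]; field_simp
  have hmode : (u - x) * (m * (1 - x) - n * x) ≤ 0 := by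
    have e : (m:ℝ) * (1 - x) - n * x = -(1 - 2*p) - ((m+1) * s - 2 * p * s) := by
      have : (m:ℝ) * (1 - x) - n * x = m - ((m:ℝ)+n+2)*x + 2*x := by ring
      rw [this, hx]
      have : ((m:ℝ)+n+2) * (p*(1+s)) = (m+1) * (1+s) := by rw [← hD]; ring
      rw [this]; ring
    have hm2 : 0 < (m:ℝ) + 1 - 2 * p := by
      have : (0:ℝ) ≤ m := by positivity
      linarith
    rcases le_total 0 s with h0 | h0
    · have hs0 : 0 < s := by
        rcases h0.eq_or_lt with h | h
        · rw [← h] at hs1; norm_num at hs1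
        · exact h
      have : 0 ≤ u - x := nonneg_of_mul_nonneg_left hus hs0
      apply mul_nonpos_of_nonneg_of_nonpos this
      rw [e]; nlinarith
    · have hs0 : s < 0 := by
        rcases h0.eq_or_lt with h | h
        · rw [h] at hs1; norm_num at hs1
        · exact h
      have : u - x ≤ 0 := by
        by_contra hc
        push Not at hc
        nlinarith
      apply mul_nonpos_of_nonpos_of_nonneg this
      rw [abs_of_neg hs0] at hs1
      rw [e]; nlinarith
  have h1 := mono_bound m n x u hx0 hx1 hu0 hu1 hmode
  have h2 := end_bound m n s p _ x hs hp rfl hx hx1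
  have h3 := coeff_bound m n
  rw [← hp] at h3
  have h1x : 0 < 1 - x := by linarith
  set c := ((m+n+1).factorial : ℝ) / (m.factorial * n.factorial)
  have hc : 0 ≤ c := by positivity
  calc c * (u^m * (1-u)^n) * (x * (1 - x)) ≤ c * (x^m * (1-x)^n) * (x * (1 - x)) := by gcongr
    _ = c * (x^(m+1) * (1-x)^(n+1)) := by ring
    _ ≤ c * (p^(m+1) * (((n:ℝ)+1)/(m+n+2))^(n+1) * Real.exp (-(11/24 * ((m:ℝ)+1) * s^2))) := by
        gcongr
    _ = (c * p^(m+1) * (((n:ℝ)+1)/(m+n+2))^(n+1)) * Real.exp (-(11/24 * ((m:ℝ)+1) * s^2)) := by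
        ring
    _ ≤ _ := by gcongr

theorem stmt14 :
    ∃ C : ℝ, 4 < C ∧
      ∀ (d D : ℕ) (a : ℝ), 1 ≤ d → 0 ≤ a →
        C * Real.log D < d → (d : ℝ) < D / C →
        1 / (D : ℝ) < Real.sqrt a → Real.sqrt a < d / (8 * D) →
        Ifun d D a <
          (D : ℝ) / Real.sqrt d * Real.exp (-((11 / 12) * a * (D : ℝ) ^ 2 / (2 * d))) := by
  refine ⟨100, by norm_num, ?_⟩
  intro d D a hd ha _ hdD ht1 ht2
  have hd0 : (1:ℝ) ≤ d := by exact_mod_cast hd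
  have hdD' : (100:ℝ) * d < D := by linarith
  have hDn : d + 1 ≤ D := by
    have : (d:ℝ) + 1 < D := by linarith
    exact_mod_cast this.le
  obtain ⟨m, rfl⟩ : ∃ m, d = m + 1 := ⟨d - 1, by omega⟩
  obtain ⟨n, rfl⟩ : ∃ n, D = m + n + 2 := ⟨D - (m+1) - 1, by omega⟩
  have k1 : m + n + 2 - 1 = m + n + 1 := by omega
  have k2 : m + 1 - 1 = m := by omega
  have k3 : m + n + 2 - (m + 1) - 1 = n := by omega
  unfold Ifun
  rw [k1, k2, k3]
  have c1 : ((m+1:ℕ):ℝ) = (m:ℝ)+1 := by push_cast; ring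
  have c2 : ((m+n+2:ℕ):ℝ) = (m:ℝ)+n+2 := by push_cast; ring
  rw [c1, c2] at ht2 hdD'
  rw [c2] at ht1
  rw [c1, c2]
  set t := Real.sqrt a with ht
  have hat : a = t^2 := (Real.sq_sqrt ha).symm
  have hdp : (0:ℝ) < (m:ℝ)+1 := by positivity
  have hDp : (0:ℝ) < (m:ℝ)+n+2 := by positivity
  obtain ⟨p, hp⟩ : ∃ p, p = ((m:ℝ)+1)/(m+n+2) := ⟨_, rfl⟩
  have hp0 : 0 < p := by rw [hp]; positivity
  have hpD : p * ((m:ℝ)+n+2) = m+1 := by rw [hp]; field_simp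
  have hp1 : p < 1/100 := by rw [hp, div_lt_iff₀ hDp]; linarith
  have ht0 : 0 < t := lt_trans (by positivity) ht1
  have htp : t < p / 8 := by
    rw [hp]; convert ht2 using 1; field_simp
  obtain ⟨s, hsd⟩ : ∃ s, s = t / p := ⟨_, rfl⟩
  have hs0 : 0 < s := by rw [hsd]; positivity
  have hts : t = p * s := by rw [hsd]; field_simp
  have hs8 : s ≤ 1/8 := by rw [hsd, div_le_iff₀ hp0]; linarith
  have hs1 : 1 < ((m:ℝ)+1) * s := by
    rw [div_lt_iff₀ hDp] at ht1
    rw [← hpD]; rw [hts] at ht1; linarith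
  have hexp : -((11 / 12) * a * ((m:ℝ)+n+2) ^ 2 / (2 * ((m:ℝ)+1)))
      = -(11/24 * ((m:ℝ)+1) * s^2) := by
    have : a * ((m:ℝ)+n+2)^2 = (((m:ℝ)+1) * s)^2 := by rw [hat, hts, ← hpD]; ring
    have h' : (11 / 12) * a * ((m:ℝ)+n+2) ^ 2 = 11/12 * (((m:ℝ)+1) * s)^2 := by
      rw [← this]; ring
    rw [h']; field_simp; ring
  rw [hexp, ← hp]
  set E := Real.exp (-(11/24 * ((m:ℝ)+1) * s^2)) with hE
  have hE0 : 0 < E := Real.exp_pos _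
  set c := ((m+n+1).factorial : ℝ) / (m.factorial * n.factorial) with hc
  have hc0 : 0 < c := by positivity
  set r := √((m:ℝ)+1) with hr
  have hr0 : 0 < r := by positivity
  have hrr : r * r = (m:ℝ)+1 := Real.mul_self_sqrt hdp.le
  have hx1 : p - t = p * (1 + -s) := by rw [hts]; ring
  have hx2 : p + t = p * (1 + s) := by rw [hts]; ring
  have x1pos : 0 < p - t := by linarith
  have hT1 : ∀ u ∈ Set.Icc (0:ℝ) (p - t), ‖u^m * (1-u)^n‖ ≤ (1/2 * r * E / (c * ((p-t) * (1-(p-t))))) := by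
    intro u hu
    have hu1 : u ≤ 1 := by linarith [hu.2]
    have h1u : 0 ≤ 1 - u := by linarith
    have hu0 := hu.1
    rw [Real.norm_of_nonneg (by positivity), le_div_iff₀ (mul_pos hc0 (mul_pos x1pos (by linarith)))]
    have := tail_bound m n (-s) p (p-t) u (by rw [abs_neg, abs_of_pos hs0]; exact hs8)
      (by rw [abs_neg, abs_of_pos hs0]; exact hs1) hp hp1 hx1 hu0 hu1
      (by nlinarith [hu.2])
    rw [neg_sq] at this
    calc _ = c * (u ^ m * (1 - u) ^ n) * ((p - t) * (1 - (p - t))) := by ring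
      _ ≤ _ := this
  have hT2 : ∀ u ∈ Set.Icc (p + t) 1, ‖u^m * (1-u)^n‖ ≤ (1/2 * r * E / (c * ((p+t) * (1-(p+t))))) := by
    intro u hu
    have hu1 : u ≤ 1 := hu.2
    have h1u : 0 ≤ 1 - u := by linarith
    have hu0 : 0 ≤ u := by linarith [hu.1]
    rw [Real.norm_of_nonneg (by positivity), le_div_iff₀ (mul_pos hc0 (mul_pos (by linarith) (by linarith)))]
    have := tail_bound m n s p (p+t) u (by rw [abs_of_pos hs0]; exact hs8)
      (by rw [abs_of_pos hs0]; exact hs1) hp hp1 hx2 hu0 hu1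
      (mul_nonneg (by linarith [hu.1]) hs0.le)
    calc _ = c * (u ^ m * (1 - u) ^ n) * ((p + t) * (1 - (p + t))) := by ring
      _ ≤ _ := this
  have hcont : Continuous (fun u : ℝ => u^m * (1-u)^n) := by fun_prop
  have hdisj : Disjoint (Set.Icc (0:ℝ) (p - t)) (Set.Icc (p + t) 1) := by
    rw [Set.disjoint_left]
    intro u hu hu'
    linarith [hu.2, hu'.1]
  rw [setIntegral_union hdisj measurableSet_Icc
    hcont.continuousOn.integrableOn_Icc hcont.continuousOn.integrableOn_Icc]
  have i1 := norm_setIntegral_le_of_norm_le_const (μ := volume) (by simp) hT1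
  have i2 := norm_setIntegral_le_of_norm_le_const (μ := volume) (by simp) hT2
  rw [Real.volume_real_Icc_of_le (by linarith)] at i1 i2
  have j1 := (le_abs_self _).trans i1
  have j2 := (le_abs_self _).trans i2
  have l1 : c * (1/2 * r * E / (c * ((p-t) * (1-(p-t)))) * (p - t - 0)) ≤ 0.51 * r * E := by
    have : 0 < 1 - (p-t) := by linarith
    have e : c * (1/2 * r * E / (c * ((p-t) * (1-(p-t)))) * (p - t - 0))
      = 1/2 * r * E / (1 - (p-t)) := by
        have := x1pos.ne'
        field_simp
        ring
    rw [e, div_le_iff₀ this]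
    have : 0 < r * E := by positivity
    nlinarith
  have l2 : c * (1/2 * r * E / (c * ((p+t) * (1-(p+t)))) * (1 - (p + t))) ≤ 0.5 * r * E / p := by
    have h1 : 0 < 1 - (p+t) := by linarith
    have h2 : 0 < p + t := by linarith
    have e : c * (1/2 * r * E / (c * ((p+t) * (1-(p+t)))) * (1 - (p + t)))
      = 0.5 * r * E / (p+t) := by
        field_simp
        norm_num
    rw [e]
    gcongr
    linarith
  have hfin : ((m:ℝ)+n+2) / r * E = r * E / p := by
    rw [hp, ← hrr]; field_simp
  rw [hfin]
  have hpos : 0 < r * E := by positivity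
  have hlast : 0.51 * r * E + 0.5 * r * E / p < r * E / p := by
    rw [← sub_pos]
    have : r * E / p - (0.51 * r * E + 0.5 * r * E / p) = r * E * (0.5 - 0.51 * p) / p := by
      field_simp; ring
    rw [this]
    apply div_pos (mul_pos hpos (by linarith)) hp0
  have m1 := mul_le_mul_of_nonneg_left j1 hc0.le
  have m2 := mul_le_mul_of_nonneg_left j2 hc0.le
  rw [mul_add]
  linarith
end
end

section
/- There exists a constant C₀ > 4 with the following property. For all integers D, d with C₀·log D < d < D/C₀, for every orthonormal basis φ_1,…,φ_D of ℂ^D and every orthogonal projection P of rank d onto a coordinate subspace, ∫_{U(D)} max_{1 ≤ α ≤ D} ( ⟨φ_α, U P U⁻¹ φ_α⟩ − d/D )² dμ(U) < 9·d·(log D)/D², where μ is the Haar probability measure on U(D). -/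
open MeasureTheory Filter

noncomputable section

/-- The unitary group U(D) of ℂ^D. -/
abbrev UG (D : ℕ) := Matrix.unitaryGroup (Fin D) ℂ

instance (D : ℕ) : MeasurableSpace (UG D) := borel _
instance (D : ℕ) : BorelSpace (UG D) := ⟨rfl⟩

/-- The squared euclidean norm ‖v‖² on ℂ^D. -/
def nsq {D : ℕ} (v : Fin D → ℂ) : ℝ := ∑ i, ‖v i‖ ^ 2

/-- The hermitian inner product ⟨v,w⟩ on ℂ^D (conjugate-linear in the first variable). -/
def dotc {D : ℕ} (v w : Fin D → ℂ) : ℂ := ∑ i, (starRingEnd ℂ) (v i) * w i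

/-- The orthogonal projection U P U⁻¹ onto the image under U of the range of P. -/
def rotProj {D : ℕ} (U : UG D) (P : Matrix (Fin D) (Fin D) ℂ) : Matrix (Fin D) (Fin D) ℂ :=
  (U : Matrix (Fin D) (Fin D) ℂ) * P * ((U⁻¹ : UG D) : Matrix (Fin D) (Fin D) ℂ)

/-- The orthogonal projection onto the coordinate subspace spanned by the standard
basis vectors with indices in s. -/
def coordProj (D : ℕ) (s : Finset (Fin D)) : Matrix (Fin D) (Fin D) ℂ :=
  Matrix.diagonal (fun i => if i ∈ s then 1 else 0)

open scoped Matrix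
theorem gauss1 (b : ℝ) (hb : 0 < b) : Integrable (fun z : ℂ => Real.exp (-(b * ‖z‖^2))) ∧ ∫ z : ℂ, Real.exp (-(b * ‖z‖^2)) = Real.pi / b := by
  have h := GaussianFourier.integral_rexp_neg_mul_sq_norm (V := ℂ) hb
  simp only [Complex.finrank_real_complex, Nat.cast_ofNat, div_self (two_ne_zero (α := ℝ)), Real.rpow_one, neg_mul] at h
  refine ⟨?_, h⟩
  by_contra hn
  rw [integral_undef hn] at h
  have : 0 < Real.pi / b := by positivity
  linarith

theorem gaussD {D : ℕ} (a : Fin D → ℝ) (ha : ∀ i, 0 < a i) :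
    ∫⁻ z : Fin D → ℂ, ENNReal.ofReal (Real.exp (-∑ i, a i * ‖z i‖^2)) = ENNReal.ofReal (∏ i, (Real.pi / a i)) := by
  have e : ∀ z : Fin D → ℂ, Real.exp (-∑ i, a i * ‖z i‖^2) = ∏ i, Real.exp (-(a i * ‖z i‖^2)) := by
    intro z; rw [← Finset.sum_neg_distrib, Real.exp_sum]
  simp_rw [e]
  rw [← ofReal_integral_eq_lintegral_ofReal]
  · rw [integral_fintype_prod_volume_eq_prod (fun i (z : ℂ) => Real.exp (-(a i * ‖z‖^2)))]
    simp_rw [fun i => (gauss1 (a i) (ha i)).2]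
  · exact Integrable.fintype_prod (f := fun i (z : ℂ) => Real.exp (-(a i * ‖z‖^2))) (fun i => (gauss1 (a i) (ha i)).1)
  · exact Filter.Eventually.of_forall fun z => Finset.prod_nonneg fun i _ => (Real.exp_pos _).le

theorem nsq_mul {D : ℕ} (U : UG D) (z : Fin D → ℂ) : nsq (U.1 *ᵥ z) = nsq z := by
  have key : ∀ v : Fin D → ℂ, ((nsq v : ℝ) : ℂ) = star v ⬝ᵥ v := by
    intro v
    simp only [nsq, dotProduct, Complex.ofReal_sum, Pi.star_apply]
    refine Finset.sum_congr rfl fun i _ => ?_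
    rw [mul_comm, Complex.star_def, Complex.mul_conj, Complex.normSq_eq_norm_sq]
  have : ((nsq (U.1 *ᵥ z) : ℝ) : ℂ) = ((nsq z : ℝ) : ℂ) := by
    rw [key, key, Matrix.star_mulVec, Matrix.dotProduct_mulVec, Matrix.vecMul_vecMul]
    have := Matrix.mem_unitaryGroup_iff'.1 U.2
    rw [Matrix.star_eq_conjTranspose] at this
    rw [this, Matrix.vecMul_one]
  exact_mod_cast this

theorem lint_unitary {D : ℕ} (U : UG D) (G : (Fin D → ℂ) → ENNReal) (hG : Measurable G) :
    ∫⁻ z : Fin D → ℂ, G (U.1 *ᵥ z) = ∫⁻ z, G z := by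
  let f : (Fin D → ℂ) →ₗ[ℝ] (Fin D → ℂ) := (Matrix.mulVecLin U.1).restrictScalars ℝ
  have hf : ∀ z, f z = U.1 *ᵥ z := fun z => rfl
  have hinj : Function.Injective f := by
    intro x y h
    simp only [hf] at h
    have h2 := congrArg (fun w => (star U.1) *ᵥ w) h
    simpa [Matrix.mulVec_mulVec, Matrix.mem_unitaryGroup_iff'.1 U.2] using h2
  have hdet : LinearMap.det f ≠ 0 := by
    have := (LinearEquiv.ofInjectiveEndo f hinj).isUnit_det'
    have e : ((LinearEquiv.ofInjectiveEndo f hinj : (Fin D → ℂ) ≃ₗ[ℝ] _) : (Fin D → ℂ) →ₗ[ℝ] _) = f := by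
      ext; simp
    rw [e] at this
    exact this.ne_zero
  have hmeas : Measurable f := (LinearMap.continuous_of_finiteDimensional f).measurable
  have hm := Measure.map_linearMap_addHaar_eq_smul_addHaar (volume : Measure (Fin D → ℂ)) hdet
  have hg : ∀ G : (Fin D → ℂ) → ENNReal, Measurable G → ∫⁻ z : Fin D → ℂ, G (U.1 *ᵥ z) = ENNReal.ofReal |(LinearMap.det f)⁻¹| * ∫⁻ z, G z := by
    intro G hG
    rw [← smul_eq_mul, ← lintegral_smul_measure, ← hm, lintegral_map hG hmeas]
    rfl
  have h1 := hg (fun z => ENNReal.ofReal (Real.exp (-∑ i, 1 * ‖z i‖^2))) (by fun_prop)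
  have h2 : ∀ z : Fin D → ℂ, ∑ i, 1 * ‖(U.1 *ᵥ z) i‖^2 = ∑ i, 1 * ‖z i‖^2 := by
    intro z; simpa [nsq] using nsq_mul U z
  simp_rw [h2] at h1
  have hJ := gaussD (D := D) (fun _ => 1) (fun _ => one_pos)
  rw [hJ] at h1
  have hc : ENNReal.ofReal |(LinearMap.det f)⁻¹| = 1 := by
    have hp : 0 < ∏ i : Fin D, (Real.pi / 1) := by positivity
    have h3 : ENNReal.ofReal |(LinearMap.det f)⁻¹| * ENNReal.ofReal (∏ i : Fin D, (Real.pi / 1)) = 1 * ENNReal.ofReal (∏ i : Fin D, (Real.pi / 1)) := by rw [one_mul]; exact h1.symm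
    exact (ENNReal.mul_left_inj (by simpa using hp) ENNReal.ofReal_ne_top).1 h3
  rw [hg G hG, hc, one_mul]

theorem exists_frame {D : ℕ} (i0 : Fin D) (w : Fin D → ℂ) (hw : nsq w = 1) : ∃ V : UG D, V.1 *ᵥ (Pi.single i0 1) = w := by
  have hn : ‖WithLp.toLp 2 w‖ = 1 := by
    rw [EuclideanSpace.norm_eq]
    simp only [nsq] at hw
    simp [hw]
  obtain ⟨b, hb⟩ := Orthonormal.exists_orthonormalBasis_extension_of_card_eq (𝕜 := ℂ) (E := EuclideanSpace ℂ (Fin D)) (ι := Fin D) (by simp)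
    (v := fun _ => WithLp.toLp 2 w) (s := {i0}) (by
      constructor
      · intro i; simpa using hn
      · intro i j hij; exact absurd (Subsingleton.elim i j) hij)
  have hb0 := hb i0 rfl
  let M : Matrix (Fin D) (Fin D) ℂ := Matrix.of fun i j => b j i
  have hM : M ∈ Matrix.unitaryGroup (Fin D) ℂ := by
    rw [Matrix.mem_unitaryGroup_iff']
    ext i j
    have := orthonormal_iff_ite.1 b.orthonormal i j
    rw [PiLp.inner_apply] at this
    simp only [Matrix.mul_apply, Matrix.star_apply, M, Matrix.of_apply, Matrix.one_apply]
    rw [← this]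
    refine Finset.sum_congr rfl fun k _ => ?_
    simp [mul_comm]
  refine ⟨⟨M, hM⟩, ?_⟩
  ext i
  simp [M, hb0]

theorem exists_trans {D : ℕ} (φ w : Fin D → ℂ) (hφ : nsq φ = 1) (hw : nsq w = 1) : ∃ V : UG D, V.1 *ᵥ φ = w := by
  have : Nonempty (Fin D) := by
    by_contra h
    rw [not_nonempty_iff] at h
    simp [nsq] at hφ
  obtain ⟨i0⟩ := this
  obtain ⟨V, hV⟩ := exists_frame i0 w hw
  obtain ⟨W, hW⟩ := exists_frame i0 φ hφ
  refine ⟨V * W⁻¹, ?_⟩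
  rw [← hW, ← hV, Matrix.mulVec_mulVec]
  have : (V * W⁻¹ : UG D).1 * W.1 = V.1 := by
    rw [← Submonoid.coe_mul]; simp
  rw [this]

theorem nsq_smul' {D : ℕ} (r : ℝ) (z : Fin D → ℂ) : nsq ((r : ℂ) • z) = r ^ 2 * nsq z := by
  simp only [nsq, Pi.smul_apply, smul_eq_mul, norm_mul, mul_pow, Finset.mul_sum]
  simp

theorem exists_polar {D : ℕ} (φ z : Fin D → ℂ) (hφ : nsq φ = 1) :
    ∃ V : UG D, z = ((Real.sqrt (nsq z) : ℝ) : ℂ) • (V.1 *ᵥ φ) := by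
  have h0 : 0 ≤ nsq z := Finset.sum_nonneg fun i _ => by positivity
  rcases h0.eq_or_lt with h | h
  · refine ⟨1, ?_⟩
    have hz : z = 0 := by
      ext i
      have := (Finset.sum_eq_zero_iff_of_nonneg (fun i _ => by positivity)).1 h.symm i (Finset.mem_univ i)
      simpa using this
    rw [← h]; simp [hz]
  · have hs : 0 < Real.sqrt (nsq z) := Real.sqrt_pos.2 h
    obtain ⟨V, hV⟩ := exists_trans φ ((((Real.sqrt (nsq z))⁻¹ : ℝ) : ℂ) • z) hφ (by
      rw [nsq_smul', inv_pow, Real.sq_sqrt h0, inv_mul_cancel₀ h.ne'])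
    refine ⟨V, ?_⟩
    rw [hV, smul_smul, ← Complex.ofReal_mul, mul_inv_cancel₀ hs.ne']
    simp

theorem cont_inv_mulVec {D : ℕ} : Continuous fun q : UG D × (Fin D → ℂ) => ((q.1⁻¹ : UG D)).1 *ᵥ q.2 := by
  have h : Continuous fun q : UG D × (Fin D → ℂ) => ((q.1⁻¹ : UG D)).1 :=
    continuous_subtype_val.comp (continuous_inv.comp continuous_fst)
  exact h.matrix_mulVec continuous_snd

theorem cont_inv_mulVec1 {D : ℕ} (φ : Fin D → ℂ) : Continuous fun U : UG D => ((U⁻¹ : UG D)).1 *ᵥ φ := by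
  have h : Continuous fun U : UG D => ((U⁻¹ : UG D)).1 :=
    continuous_subtype_val.comp continuous_inv
  exact h.matrix_mulVec continuous_const

set_option maxHeartbeats 1000000 in
theorem core {D : ℕ} (a : Fin D → ℝ) (ha : ∀ i, 0 < a i) (φ : Fin D → ℂ) (hφ : nsq φ = 1)
    (μ : Measure (UG D)) [μ.IsHaarMeasure] [IsProbabilityMeasure μ] :
    ∫⁻ U, ENNReal.ofReal (((∑ i, a i * ‖((U⁻¹ : UG D).1 *ᵥ φ) i‖^2) ^ D)⁻¹) ∂μ = ENNReal.ofReal (∏ i, (a i)⁻¹) := by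
  let Q : (Fin D → ℂ) → ℝ := fun z => ∑ i, a i * ‖z i‖^2
  have hQc : Continuous Q := by fun_prop
  have hQs : ∀ (r : ℝ) z, Q ((r : ℂ) • z) = r ^ 2 * Q z := by
    intro r z
    simp only [Q, Pi.smul_apply, smul_eq_mul, norm_mul, mul_pow, Finset.mul_sum]
    refine Finset.sum_congr rfl fun i _ => ?_
    simp; ring
  have hQp : ∀ U : UG D, 0 < Q ((U⁻¹ : UG D).1 *ᵥ φ) := by
    intro U
    have h1 : nsq ((U⁻¹ : UG D).1 *ᵥ φ) = 1 := by rw [nsq_mul, hφ]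
    have h2 : 0 ≤ Q ((U⁻¹ : UG D).1 *ᵥ φ) := Finset.sum_nonneg fun i _ => mul_nonneg (ha i).le (by positivity)
    refine lt_of_le_of_ne h2 fun h => ?_
    have h3 := (Finset.sum_eq_zero_iff_of_nonneg (fun i _ => mul_nonneg (ha i).le (by positivity))).1 h.symm
    have : nsq ((U⁻¹ : UG D).1 *ᵥ φ) = 0 := Finset.sum_eq_zero fun i hi => by
      have := h3 i hi
      simpa [(ha i).ne'] using this
    linarith
  let G : (Fin D → ℂ) → ENNReal := fun z => ENNReal.ofReal (Real.exp (-Q z))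
  have hGm : Measurable G := by
    have : Measurable Q := hQc.measurable
    fun_prop
  have s1 : ∫⁻ z, G z = ∫⁻ U, (∫⁻ z : Fin D → ℂ, G ((U⁻¹ : UG D).1 *ᵥ z)) ∂μ := by
    simp_rw [fun U : UG D => lint_unitary U⁻¹ G hGm]
    simp
  have s2 : ∫⁻ U, (∫⁻ z : Fin D → ℂ, G ((U⁻¹ : UG D).1 *ᵥ z)) ∂μ = ∫⁻ z : Fin D → ℂ, ∫⁻ U, G ((U⁻¹ : UG D).1 *ᵥ z) ∂μ := by
    apply lintegral_lintegral_swap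
    exact (hGm.comp cont_inv_mulVec.measurable).aemeasurable
  have s3 : ∀ z : Fin D → ℂ, ∫⁻ U, G ((U⁻¹ : UG D).1 *ᵥ z) ∂μ = ∫⁻ U, ENNReal.ofReal (Real.exp (-(nsq z * Q ((U⁻¹ : UG D).1 *ᵥ φ)))) ∂μ := by
    intro z
    obtain ⟨V, hV⟩ := exists_polar φ z hφ
    have h0 : 0 ≤ nsq z := Finset.sum_nonneg fun i _ => by positivity
    rw [← lintegral_mul_left_eq_self (fun U : UG D => ENNReal.ofReal (Real.exp (-(nsq z * Q ((U⁻¹ : UG D).1 *ᵥ φ))))) V⁻¹]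
    refine lintegral_congr fun U => ?_
    have e : ((V⁻¹ * U)⁻¹ : UG D).1 *ᵥ φ = (U⁻¹ : UG D).1 *ᵥ (V.1 *ᵥ φ) := by
      rw [Matrix.mulVec_mulVec, ← Submonoid.coe_mul]
      simp
    have e2 : (U⁻¹ : UG D).1 *ᵥ z = ((Real.sqrt (nsq z) : ℝ) : ℂ) • ((U⁻¹ : UG D).1 *ᵥ (V.1 *ᵥ φ)) := by
      conv_lhs => rw [hV]
      rw [Matrix.mulVec_smul]
    simp only [G]
    rw [e, e2, hQs, Real.sq_sqrt h0]
  have s4 : ∫⁻ z : Fin D → ℂ, ∫⁻ U, ENNReal.ofReal (Real.exp (-(nsq z * Q ((U⁻¹ : UG D).1 *ᵥ φ)))) ∂μ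
      = ∫⁻ U, (∫⁻ z : Fin D → ℂ, ENNReal.ofReal (Real.exp (-(nsq z * Q ((U⁻¹ : UG D).1 *ᵥ φ))))) ∂μ := by
    apply lintegral_lintegral_swap
    have hc : Continuous fun q : (Fin D → ℂ) × UG D => Real.exp (-(nsq q.1 * Q ((q.2⁻¹ : UG D).1 *ᵥ φ))) := by
      have h1 : Continuous fun q : (Fin D → ℂ) × UG D => Q ((q.2⁻¹ : UG D).1 *ᵥ φ) :=
        hQc.comp ((cont_inv_mulVec1 φ).comp continuous_snd)
      have h2 : Continuous fun q : (Fin D → ℂ) × UG D => nsq q.1 := by unfold nsq; fun_prop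
      fun_prop
    exact (ENNReal.measurable_ofReal.comp hc.measurable).aemeasurable
  have s5 : ∀ U : UG D, ∫⁻ z : Fin D → ℂ, ENNReal.ofReal (Real.exp (-(nsq z * Q ((U⁻¹ : UG D).1 *ᵥ φ))))
      = ENNReal.ofReal (Real.pi ^ D) * ENNReal.ofReal ((Q ((U⁻¹ : UG D).1 *ᵥ φ) ^ D)⁻¹) := by
    intro U
    have := gaussD (D := D) (fun _ => Q ((U⁻¹ : UG D).1 *ᵥ φ)) (fun _ => hQp U)
    simp_rw [← Finset.mul_sum] at this
    rw [← ENNReal.ofReal_mul (by positivity), ← div_eq_mul_inv, ← div_pow]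
    simp only [Finset.prod_const, Finset.card_univ, Fintype.card_fin] at this
    rw [← this]
    refine lintegral_congr fun z => ?_
    rw [mul_comm]; rfl
  have hm : Measurable fun U : UG D => ENNReal.ofReal ((Q ((U⁻¹ : UG D).1 *ᵥ φ) ^ D)⁻¹) := by
    have h1 : Measurable fun U : UG D => Q ((U⁻¹ : UG D).1 *ᵥ φ) := (hQc.comp (cont_inv_mulVec1 φ)).measurable
    exact ((h1.pow_const D).inv).ennreal_ofReal
  rw [s2, lintegral_congr s3, s4, lintegral_congr s5, lintegral_const_mul _ hm, gaussD a ha] at s1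
  have e : ∏ i, (Real.pi / a i) = Real.pi ^ D * ∏ i, (a i)⁻¹ := by
    simp [div_eq_mul_inv, Finset.prod_mul_distrib]
  rw [e, ENNReal.ofReal_mul (by positivity)] at s1
  have hp : 0 < Real.pi ^ D := by positivity
  exact ((ENNReal.mul_right_inj (by simpa using hp) ENNReal.ofReal_ne_top).1 s1).symm

theorem X_eq {D : ℕ} (U : UG D) (s : Finset (Fin D)) (φ : Fin D → ℂ) :
    (dotc φ ((rotProj U (coordProj D s)).mulVec φ)).re = ∑ i ∈ s, ‖((U⁻¹ : UG D).1 *ᵥ φ) i‖^2 := by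
  set u := (U⁻¹ : UG D).1 *ᵥ φ with hu
  have h1 : dotc φ ((rotProj U (coordProj D s)).mulVec φ) = star u ⬝ᵥ (coordProj D s *ᵥ u) := by
    have : dotc φ ((rotProj U (coordProj D s)).mulVec φ) = star φ ⬝ᵥ ((rotProj U (coordProj D s)).mulVec φ) := rfl
    rw [this, rotProj, ← Matrix.mulVec_mulVec, ← Matrix.mulVec_mulVec, ← hu, Matrix.dotProduct_mulVec]
    congr 1
    rw [hu, Matrix.star_mulVec]
    congr 1
    have : (U⁻¹ : UG D).1 = star U.1 := rfl
    rw [this, Matrix.star_eq_conjTranspose, Matrix.conjTranspose_conjTranspose]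
  rw [h1]
  simp only [dotProduct, coordProj, Matrix.mulVec_diagonal, Pi.star_apply, Complex.re_sum]
  rw [← Finset.sum_filter_add_sum_filter_not Finset.univ (· ∈ s)]
  have e2 : ∑ x with x ∉ s, (star (u x) * ((if x ∈ s then 1 else 0) * u x)).re = 0 :=
    Finset.sum_eq_zero fun i hi => by simp [(Finset.mem_filter.1 hi).2]
  rw [e2, add_zero, Finset.filter_mem_eq_inter, Finset.univ_inter]
  refine Finset.sum_congr rfl fun i hi => ?_
  simp only [hi, if_true, one_mul]
  rw [mul_comm, Complex.star_def, Complex.mul_conj, Complex.normSq_eq_norm_sq, Complex.ofReal_re]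

theorem inv_bound (x : ℝ) (hx : |x| ≤ 1/2) : (1 - x)⁻¹ ≤ Real.exp (x + 2 * x^2) := by
  have h := abs_le.1 hx
  have hp : 0 < 1 - x := by linarith
  rw [← Real.exp_log (inv_pos.2 hp), Real.exp_le_exp, ]
  have := Real.log_le_sub_one_of_pos (inv_pos.2 hp)
  refine this.trans ?_
  have : (1 - x)⁻¹ ≤ 1 + x + 2 * x^2 := by
    rw [inv_le_iff_one_le_mul₀ hp]
    nlinarith [mul_nonneg (sq_nonneg x) (by linarith : 0 ≤ 1 - 2 * x)]
  linarith

theorem mgf {D d : ℕ} (hd : d ≤ D) (hD : 0 < D) (t : ℝ) (ht : |t| ≤ 1/2) (s : Finset (Fin D)) (hs : s.card = d)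
    (φ : Fin D → ℂ) (hφ : nsq φ = 1)
    (μ : Measure (UG D)) [μ.IsHaarMeasure] [IsProbabilityMeasure μ] :
    ∫⁻ U, ENNReal.ofReal (Real.exp (t * D * ((dotc φ ((rotProj U (coordProj D s)).mulVec φ)).re - d / D))) ∂μ
      ≤ ENNReal.ofReal (Real.exp (2 * t^2 * d)) := by
  have hDr : (0:ℝ) < D := by exact_mod_cast hD
  have hdr : (d:ℝ) ≤ D := by exact_mod_cast hd
  set p : ℝ := d / D with hp
  have hp0 : 0 ≤ p := by positivity
  have hp1 : p ≤ 1 := by rw [hp, div_le_one hDr]; exact hdr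
  have hpD : p * D = d := by rw [hp]; field_simp
  let a : Fin D → ℝ := fun i => 1 - t * ((if i ∈ s then 1 else 0) - p)
  have habs : ∀ i, |t * ((if i ∈ s then 1 else 0) - p)| ≤ 1/2 := by
    intro i
    rw [abs_mul]
    have : |(if i ∈ s then (1:ℝ) else 0) - p| ≤ 1 := by
      split_ifs <;> rw [abs_le] <;> constructor <;> linarith
    nlinarith [abs_nonneg t, abs_nonneg ((if i ∈ s then (1:ℝ) else 0) - p)]
  have ha : ∀ i, 0 < a i := by
    intro i
    have := (abs_le.1 (habs i)).2
    simp only [a]; linarith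
  have hc := core a ha φ hφ μ
  have hsum : ∀ f : Bool → ℝ, ∑ i : Fin D, f (decide (i ∈ s)) = d * f true + (D - d) * f false := by
    intro f
    rw [← Finset.sum_add_sum_compl s]
    rw [Finset.sum_congr rfl (g := fun _ => f true) (fun i hi => by simp [hi]),
      Finset.sum_congr (s₁ := sᶜ) rfl (g := fun _ => f false) (fun i hi => by simp [Finset.mem_compl.1 hi])]
    simp only [Finset.sum_const, Finset.card_compl, Fintype.card_fin, hs, nsmul_eq_mul]
    rw [Nat.cast_sub hd]
  have hR : ∏ i, (a i)⁻¹ ≤ Real.exp (2 * t^2 * d) := by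
    calc ∏ i, (a i)⁻¹ ≤ ∏ i, Real.exp (t * ((if i ∈ s then 1 else 0) - p) + 2 * (t * ((if i ∈ s then 1 else 0) - p))^2) :=
          Finset.prod_le_prod (fun i _ => inv_nonneg.2 (ha i).le) fun i _ => inv_bound _ (habs i)
      _ = Real.exp (∑ i, (t * ((if i ∈ s then 1 else 0) - p) + 2 * (t * ((if i ∈ s then 1 else 0) - p))^2)) := (Real.exp_sum _ _).symm
      _ ≤ _ := by
        rw [Real.exp_le_exp]
        have := hsum (fun b => t * ((if b = true then 1 else 0) - p) + 2 * (t * ((if b = true then 1 else 0) - p))^2)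
        simp only [decide_eq_true_eq] at this
        rw [this]
        simp only [if_true, Bool.false_eq_true, if_false]
        have hDd : (D:ℝ) - d = D * (1 - p) := by rw [← hpD]; ring
        rw [hDd, ← hpD]
        have : p * D * (t * (1 - p) + 2 * (t * (1 - p))^2) + D * (1 - p) * (t * (0 - p) + 2 * (t * (0 - p))^2)
          = 2 * t^2 * (p * D) - 2 * t^2 * (p * D) * p := by ring
        rw [this]
        have : 0 ≤ 2 * t^2 * (p * D) * p := by positivity
        linarith
  refine le_trans (lintegral_mono fun U => ?_) (hc.le.trans (ENNReal.ofReal_le_ofReal hR))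
  apply ENNReal.ofReal_le_ofReal
  rw [X_eq]
  have h1 : ∑ i, ‖((U⁻¹ : UG D).1 *ᵥ φ) i‖^2 = 1 := by
    have := nsq_mul U⁻¹ φ; rw [hφ] at this; exact this
  set u := (U⁻¹ : UG D).1 *ᵥ φ with hu
  have hQ : ∑ i, a i * ‖u i‖^2 = 1 - t * (∑ i ∈ s, ‖u i‖^2 - p) := by
    have : ∀ i, a i * ‖u i‖^2 = (1 + t * p) * ‖u i‖^2 - t * (if i ∈ s then ‖u i‖^2 else 0) := by
      intro i; simp only [a]; split_ifs <;> ring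
    simp_rw [this]
    rw [Finset.sum_sub_distrib, ← Finset.mul_sum, ← Finset.mul_sum, h1, Finset.sum_ite_mem, Finset.univ_inter]
    ring
  have hQ0 : 0 < ∑ i, a i * ‖u i‖^2 := by
    have h0 : 0 ≤ ∑ i, a i * ‖u i‖^2 := Finset.sum_nonneg fun i _ => mul_nonneg (ha i).le (by positivity)
    have h2 : ∀ i, 1/2 * ‖u i‖^2 ≤ a i * ‖u i‖^2 := by
      intro i
      refine mul_le_mul_of_nonneg_right ?_ (by positivity)
      have := (abs_le.1 (habs i)).2
      simp only [a]; linarith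
    have h3 := Finset.sum_le_sum (s := Finset.univ) fun i _ => h2 i
    rw [← Finset.mul_sum, h1] at h3
    linarith
  set y := t * (∑ i ∈ s, ‖u i‖^2 - p) with hy
  rw [hQ] at hQ0 ⊢
  rw [show t * D * (∑ i ∈ s, ‖u i‖^2 - p) = -(D * (-y)) by rw [hy]; ring, Real.exp_neg, Real.exp_nat_mul]
  apply inv_anti₀ (by positivity)
  apply pow_le_pow_left₀ hQ0.le
  have := Real.add_one_le_exp (-y)
  linarith

theorem sq_bound (A w : ℝ) (hA : 0 ≤ A) (hw : 0 ≤ w) : w^2 ≤ A^2 + (2*A+2) * (Real.exp (-A) * Real.exp w) := by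
  rw [← Real.exp_add]
  rcases le_total w A with h | h
  · have : 0 ≤ (2*A+2) * Real.exp (-A + w) := by positivity
    nlinarith
  · have hv : 0 ≤ -A + w := by linarith
    have h1 := Real.add_one_le_exp (-A + w)
    have h2 := Real.quadratic_le_exp_of_nonneg hv
    nlinarith

theorem stmt15 :
    ∃ C₀ : ℝ, 4 < C₀ ∧
      ∀ (D d : ℕ), C₀ * Real.log D < d → (d : ℝ) < D / C₀ →
      ∀ φ : Fin D → Fin D → ℂ, (∀ α β, dotc (φ α) (φ β) = if α = β then 1 else 0) →
      ∀ s : Finset (Fin D), s.card = d →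
      ∀ (μ : Measure (UG D)), μ.IsHaarMeasure → IsProbabilityMeasure μ →
      (∫ U, (⨆ α, ((dotc (φ α) ((rotProj U (coordProj D s)).mulVec (φ α))).re - d / D) ^ 2) ∂μ)
        < 9 * d * Real.log D / (D : ℝ) ^ 2 := by
  have hC : (21:ℝ) ≤ Real.exp 20 := by have := Real.add_one_le_exp (20:ℝ); linarith
  refine ⟨Real.exp 20, by linarith, ?_⟩
  intro D d h1 h2 φ hφ s hs μ hμ hμp
  set L := Real.log D with hL
  have hL0 : 0 ≤ L := Real.log_natCast_nonneg D
  have hd0 : (0:ℝ) < d := lt_of_le_of_lt (by positivity) h1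
  have hd1 : (1:ℝ) ≤ d := by exact_mod_cast (Nat.cast_pos.1 hd0 : 0 < d)
  rw [lt_div_iff₀ (Real.exp_pos 20)] at h2
  have hDC : Real.exp 20 < D := by nlinarith
  have hD0 : (0:ℝ) < D := (Real.exp_pos _).trans hDC
  have hDn : 0 < D := Nat.cast_pos.1 hD0
  have hL20 : 20 < L := (Real.lt_log_iff_exp_lt hD0).2 hDC
  have hdD : d ≤ D := by
    have : (d:ℝ) ≤ D := by nlinarith
    exact_mod_cast this
  have : Nonempty (Fin D) := ⟨⟨0, hDn⟩⟩
  have hexpL : Real.exp L = D := Real.exp_log hD0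
  set t := Real.sqrt (L / (2 * d)) with ht
  have ht0 : 0 < t := Real.sqrt_pos.2 (by positivity)
  have ht2 : t^2 = L / (2 * d) := Real.sq_sqrt (by positivity)
  have ht2d : 2 * t^2 * d = L := by rw [ht2]; field_simp
  have hth : t ≤ 1/2 := by
    rw [ht]; apply Real.sqrt_le_iff.2 ⟨by norm_num, ?_⟩
    rw [div_le_iff₀ (by positivity)]
    nlinarith
  let Y : Fin D → UG D → ℝ := fun α U => (dotc (φ α) ((rotProj U (coordProj D s)).mulVec (φ α))).re - d / D
  have hYc : ∀ α, Continuous (Y α) := by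
    intro α
    simp only [Y, X_eq]
    have := cont_inv_mulVec1 (φ α)
    have h2 : ∀ i, Continuous fun U : UG D => ((U⁻¹ : UG D).1 *ᵥ (φ α)) i := fun i => (continuous_apply i).comp this
    exact (continuous_finsetSum _ fun i _ => ((h2 i).norm.pow 2)).sub continuous_const
  have hn : ∀ α, nsq (φ α) = 1 := by
    intro α
    have := hφ α α
    simp only [if_true] at this
    have h3 : ((nsq (φ α) : ℝ) : ℂ) = 1 := by
      rw [← this]
      simp only [nsq, dotc, Complex.ofReal_sum]
      refine Finset.sum_congr rfl fun i _ => ?_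
      rw [mul_comm, Complex.mul_conj, Complex.normSq_eq_norm_sq]
    exact_mod_cast h3
  have hexp : ∀ r : ℝ, r^2 = t^2 → |r| ≤ 1/2 → ∀ α, Integrable (fun U => Real.exp (r * D * Y α U)) μ ∧ ∫ U, Real.exp (r * D * Y α U) ∂μ ≤ D := by
    intro r hr hra α
    have hm := mgf hdD hDn r hra s hs (φ α) (hn α) μ
    rw [hr, ht2d, hexpL] at hm
    have hmeas : AEStronglyMeasurable (fun U => Real.exp (r * D * Y α U)) μ :=
      (Real.continuous_exp.comp (continuous_const.mul (hYc α))).measurable.aestronglyMeasurable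
    have hnn : 0 ≤ᵐ[μ] fun U => Real.exp (r * D * Y α U) := Filter.Eventually.of_forall fun U => (Real.exp_pos _).le
    refine ⟨(lintegral_ofReal_ne_top_iff_integrable hmeas hnn).1 (ne_top_of_le_ne_top ENNReal.ofReal_ne_top hm), ?_⟩
    rw [integral_eq_lintegral_of_nonneg_ae hnn hmeas]
    exact ENNReal.toReal_le_of_le_ofReal hD0.le hm
  have hP := hexp t rfl (by rw [abs_of_pos ht0]; exact hth)
  have hN := hexp (-t) (by ring) (by rw [abs_neg, abs_of_pos ht0]; exact hth)
  let H : UG D → ℝ := fun U => (t * D)⁻¹^2 * ((2*L)^2 + (2*(2*L)+2) * (Real.exp (-(2*L)) * ∑ α, (Real.exp (t * D * Y α U) + Real.exp (-t * D * Y α U))))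
  have hSi : Integrable (fun U => ∑ α, (Real.exp (t * D * Y α U) + Real.exp (-t * D * Y α U))) μ :=
    integrable_finsetSum _ fun α _ => (hP α).1.add (hN α).1
  have hHi : Integrable H μ := ((integrable_const _).add ((hSi.const_mul _).const_mul _)).const_mul _
  have hle : ∀ U, (⨆ α, (Y α U)^2) ≤ H U := by
    intro U
    refine ciSup_le fun α => ?_
    have b1 := sq_bound (2*L) |t * D * Y α U| (by positivity) (abs_nonneg _)
    have b2 : Real.exp |t * D * Y α U| ≤ ∑ α, (Real.exp (t * D * Y α U) + Real.exp (-t * D * Y α U)) := by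
      refine le_trans ?_ (Finset.single_le_sum (f := fun α => Real.exp (t * D * Y α U) + Real.exp (-t * D * Y α U)) (fun i _ => by positivity) (Finset.mem_univ α))
      have e : -t * D * Y α U = -(t * D * Y α U) := by ring
      simp only [e]
      rcases abs_choice (t * D * Y α U) with h | h <;> rw [h]
      · linarith [Real.exp_pos (-(t * D * Y α U))]
      · linarith [Real.exp_pos (t * D * Y α U)]
    rw [sq_abs] at b1
    have e : (Y α U)^2 = (t * D)⁻¹^2 * (t * D * Y α U)^2 := by field_simp
    rw [e]
    refine mul_le_mul_of_nonneg_left (b1.trans ?_) (by positivity)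
    gcongr
  have hSv : ∫ U, (∑ α, (Real.exp (t * D * Y α U) + Real.exp (-t * D * Y α U))) ∂μ ≤ 2 * D * D := by
    rw [integral_finsetSum (f := fun α U => Real.exp (t * D * Y α U) + Real.exp (-t * D * Y α U)) _ fun α _ => (hP α).1.add (hN α).1]
    calc _ ≤ ∑ α : Fin D, (2 * D : ℝ) := Finset.sum_le_sum fun α _ => by
          rw [integral_add (hP α).1 (hN α).1]; linarith [(hP α).2, (hN α).2]
      _ = _ := by simp; ring
  have hHv : ∫ U, H U ∂μ ≤ (t * D)⁻¹^2 * ((2*L)^2 + (2*(2*L)+2) * 2) := by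
    simp only [H]
    rw [integral_const_mul, integral_add (integrable_const _) ((hSi.const_mul _).const_mul _), integral_const_mul, integral_const_mul, integral_const]
    simp only [probReal_univ, one_smul]
    refine mul_le_mul_of_nonneg_left ?_ (by positivity)
    have : Real.exp (-(2*L)) = ((D:ℝ)^2)⁻¹ := by
      rw [Real.exp_neg, two_mul, Real.exp_add, hexpL, sq]
    rw [this]
    have : ((D:ℝ)^2)⁻¹ * ∫ U, (∑ α, (Real.exp (t * D * Y α U) + Real.exp (-t * D * Y α U))) ∂μ ≤ 2 := by
      rw [inv_mul_le_iff₀ (by positivity)]; linarith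
    gcongr
  calc _ ≤ ∫ U, H U ∂μ := integral_mono_of_nonneg (Filter.Eventually.of_forall fun U => Real.iSup_nonneg fun α => sq_nonneg _) hHi (Filter.Eventually.of_forall hle)
    _ ≤ _ := hHv
    _ < _ := by
      have e : (t * D)⁻¹^2 = 2 * d / (L * (D:ℝ)^2) := by
        rw [inv_pow, mul_pow, ht2]; field_simp
      rw [e, div_mul_eq_mul_div, div_lt_div_iff₀ (by positivity) (by positivity)]
      have : 2 * ((2*L)^2 + (2*(2*L)+2) * 2) < 9 * L * L := by nlinarith
      have h5 : 0 < d * (D:ℝ)^2 := by positivity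
      nlinarith [mul_lt_mul_of_pos_right this h5]
end
end

section
/- Let d, D be positive integers with 1 < d and D > 2d + 2, and define f : (0,1) → ℝ by f(t) = (1−t)^{d+1−D}·(1+t)^{1−d} + (1+t)^{d+1−D}·(1−t)^{1−d}. Then f is strictly increasing on the interval (0,1) (its derivative is positive at every t ∈ (0,1)). -/
theorem stmt17_aux (d D : ℕ) (hd : 1 < d) (hD : 2 * d + 2 < D) (t : ℝ)
    (ht : t ∈ Set.Ioo (0 : ℝ) 1) :
    ∃ f' : ℝ, 0 < f' ∧ HasDerivAt (fun t : ℝ =>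
        (1 - t) ^ ((d : ℤ) + 1 - D) * (1 + t) ^ ((1 : ℤ) - d) +
          (1 + t) ^ ((d : ℤ) + 1 - D) * (1 - t) ^ ((1 : ℤ) - d)) f' t := by
  obtain ⟨h0, h1⟩ := ht
  obtain ⟨b, rfl⟩ : ∃ b, d = b + 1 := ⟨d - 1, by omega⟩
  obtain ⟨n, rfl⟩ : ∃ n, D = (b + n) + (b + 1) + 1 := ⟨D - (2 * b + 2), by omega⟩
  have hx : 0 < 1 - t := by linarith
  have hy : 0 < 1 + t := by linarith
  have e1 : (((b + 1 : ℕ) : ℤ) + 1 - ((b + n + (b + 1) + 1 : ℕ) : ℤ)) = -((b : ℤ) + n) := by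
    push_cast; ring
  have e2 : ((1 : ℤ) - ((b + 1 : ℕ) : ℤ)) = -(b : ℤ) := by push_cast; ring
  rw [e1, e2]
  have dx : HasDerivAt (fun t : ℝ => 1 - t) (-1) t := by
    simpa using (hasDerivAt_id t).const_sub 1
  have dy : HasDerivAt (fun t : ℝ => 1 + t) 1 t := by
    simpa using (hasDerivAt_id t).const_add 1
  have px (m : ℤ) := (hasDerivAt_zpow m (1 - t) (Or.inl hx.ne')).comp t dx
  have py (m : ℤ) := (hasDerivAt_zpow m (1 + t) (Or.inl hy.ne')).comp t dy
  have key := ((px (-((b : ℤ) + n))).mul (py (-(b : ℤ)))).add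
    ((py (-((b : ℤ) + n))).mul (px (-(b : ℤ))))
  refine ⟨_, ?_, key⟩
  simp only [Function.comp]
  generalize hX : 1 - t = x at *
  generalize hY : 1 + t = y at *
  have hxy : x < y := by linarith
  have q1 (z : ℝ) (hz : 0 < z) : z ^ (-((b : ℤ) + n)) = (z ^ b)⁻¹ * (z ^ n)⁻¹ := by
    rw [neg_add, zpow_add₀ hz.ne']; simp
  have q2 (z : ℝ) (hz : 0 < z) : z ^ (-((b : ℤ) + n) - 1) = (z ^ b)⁻¹ * (z ^ n)⁻¹ * z⁻¹ := by
    rw [zpow_sub_one₀ hz.ne', q1 z hz]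
  have q3 (z : ℝ) (hz : 0 < z) : z ^ (-(b : ℤ)) = (z ^ b)⁻¹ := by simp
  have q4 (z : ℝ) (hz : 0 < z) : z ^ (-(b : ℤ) - 1) = (z ^ b)⁻¹ * z⁻¹ := by
    rw [zpow_sub_one₀ hz.ne', q3 z hz]
  rw [q1 x hx, q1 y hy, q2 x hx, q2 y hy, q3 x hx, q3 y hy, q4 x hx, q4 y hy]
  push_cast
  have hn : (0 : ℝ) < n := by
    have : 0 < n := by omega
    exact_mod_cast this
  have hb : (0 : ℝ) ≤ b := by positivity
  have hp : x ^ n ≤ y ^ n := pow_le_pow_left₀ hx.le hxy.le n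
  have hxn : 0 < x ^ n := by positivity
  have hyn : 0 < y ^ n := by positivity
  have hxb : 0 < x ^ b := by positivity
  have hyb : 0 < y ^ b := by positivity
  have hA : 0 < (b + n) * y - b * x := by nlinarith [mul_nonneg hb (sub_nonneg.2 hxy.le), mul_pos hn hy]
  have hB : (b + n) * x - b * y < (b + n) * y - b * x := by
    nlinarith [mul_nonneg hb (sub_nonneg.2 hxy.le), mul_pos hn (sub_pos.2 hxy)]
  have main : 0 < y ^ n * ((b + n) * y - b * x) - x ^ n * ((b + n) * x - b * y) := by
    have := mul_le_mul_of_nonneg_right hp hA.le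
    have := mul_lt_mul_of_pos_left hB hxn
    linarith
  have hP : 0 < (x ^ b)⁻¹ * (y ^ b)⁻¹ * (x ^ n)⁻¹ * (y ^ n)⁻¹ * x⁻¹ * y⁻¹ := by positivity
  refine lt_of_lt_of_eq (mul_pos hP main) ?_
  generalize x ^ n = xn at *
  generalize y ^ n = yn at *
  generalize x ^ b = xb at *
  generalize y ^ b = yb at *
  field_simp
  ring

theorem stmt17 (d D : ℕ) (hd : 1 < d) (hD : 2 * d + 2 < D) :
    StrictMonoOn (fun t : ℝ =>
        (1 - t) ^ ((d : ℤ) + 1 - D) * (1 + t) ^ ((1 : ℤ) - d) +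
          (1 + t) ^ ((d : ℤ) + 1 - D) * (1 - t) ^ ((1 : ℤ) - d))
      (Set.Ioo (0 : ℝ) 1) ∧
    ∀ t ∈ Set.Ioo (0 : ℝ) 1,
      0 < deriv (fun t : ℝ =>
        (1 - t) ^ ((d : ℤ) + 1 - D) * (1 + t) ^ ((1 : ℤ) - d) +
          (1 + t) ^ ((d : ℤ) + 1 - D) * (1 - t) ^ ((1 : ℤ) - d)) t := by
  have hpos : ∀ t ∈ Set.Ioo (0 : ℝ) 1,
      0 < deriv (fun t : ℝ =>
        (1 - t) ^ ((d : ℤ) + 1 - D) * (1 + t) ^ ((1 : ℤ) - d) +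
          (1 + t) ^ ((d : ℤ) + 1 - D) * (1 - t) ^ ((1 : ℤ) - d)) t := by
    intro t ht
    obtain ⟨f', h, hf⟩ := stmt17_aux d D hd hD t ht
    rw [hf.deriv]
    exact h
  refine ⟨strictMonoOn_of_deriv_pos (convex_Ioo 0 1) ?_ ?_, hpos⟩
  · intro t ht
    obtain ⟨f', h, hf⟩ := stmt17_aux d D hd hD t ht
    exact hf.continuousAt.continuousWithinAt
  · rw [interior_Ioo]
    exact hpos
end

section
/- For integers d, D with 1 < d < D − 1 and a real a with 0 ≤ a < 1/4, define J(d,D,a) = ((D−1)!/((d−1)!·(D−d−1)!)) · ∫_{1/2 − √(1/4 − a)}^{1/2 + √(1/4 − a)} (w·(1−w) − a)^{D−2} / ( w^{D−d−1}·(1−w)^{d−1} ) dw. If moreover 1 < d and D > 2d + 2, then 0 ≤ J(d,D,a) ≤ (1 − 4a)^{D − 3/2} ≤ e^{−4a·(D − 3/2)} for all 0 ≤ a < 1/4. -/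
open MeasureTheory intervalIntegral

noncomputable section

/-- The quantity J(d,D,a). -/
def Jfun (d D : ℕ) (a : ℝ) : ℝ :=
  (Nat.factorial (D - 1) : ℝ) / (Nat.factorial (d - 1) * Nat.factorial (D - d - 1)) *
    ∫ x in (1 / 2 - Real.sqrt (1 / 4 - a))..(1 / 2 + Real.sqrt (1 / 4 - a)),
      (x * (1 - x) - a) ^ (D - 2) / (x ^ (D - d - 1) * (1 - x) ^ (d - 1))

theorem beta_nat (m n : ℕ) : ∫ x in (0:ℝ)..1, x ^ m * (1 - x) ^ n =
    (m.factorial * n.factorial : ℝ) / ((m + n + 1).factorial : ℝ) := by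
  have h := Complex.betaIntegral_eq_Gamma_mul_div ((m : ℂ) + 1) ((n : ℂ) + 1)
    (by simp; positivity) (by simp; positivity)
  rw [show (m : ℂ) + 1 + (n + 1) = ((m + n + 1 : ℕ) : ℂ) + 1 by push_cast; ring,
    Complex.Gamma_nat_eq_factorial, Complex.Gamma_nat_eq_factorial,
    Complex.Gamma_nat_eq_factorial, Complex.betaIntegral] at h
  have h2 : (∫ x in (0:ℝ)..1, (x : ℂ) ^ ((m : ℂ) + 1 - 1) * (1 - (x : ℂ)) ^ ((n : ℂ) + 1 - 1))
      = ((∫ x in (0:ℝ)..1, x ^ m * (1 - x) ^ n : ℝ) : ℂ) := by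
    rw [← intervalIntegral.integral_ofReal]
    congr 1
    ext x
    simp
  rw [h2] at h
  apply Complex.ofReal_injective
  rw [h]
  push_cast
  rfl

theorem even_mono (p : ℕ) (x y : ℝ) (hx : 0 ≤ x) (hxy : x ≤ y) :
    (0 ≤ (1 + x) ^ p + (1 - x) ^ p ∧ (1 + x) ^ p + (1 - x) ^ p ≤ (1 + y) ^ p + (1 - y) ^ p) ∧
    (0 ≤ (1 + x) ^ p - (1 - x) ^ p ∧ (1 + x) ^ p - (1 - x) ^ p ≤ (1 + y) ^ p - (1 - y) ^ p) := by
  induction p with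
  | zero => norm_num
  | succ p ih =>
    obtain ⟨⟨h1, h2⟩, h3, h4⟩ := ih
    have e1 (z : ℝ) : (1 + z) ^ (p + 1) + (1 - z) ^ (p + 1) =
      ((1 + z) ^ p + (1 - z) ^ p) + z * ((1 + z) ^ p - (1 - z) ^ p) := by ring
    have e2 (z : ℝ) : (1 + z) ^ (p + 1) - (1 - z) ^ (p + 1) =
      ((1 + z) ^ p - (1 - z) ^ p) + z * ((1 + z) ^ p + (1 - z) ^ p) := by ring
    rw [e1, e1, e2, e2]
    have m1 := mul_le_mul hxy h4 h3 (hx.trans hxy)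
    have m2 := mul_le_mul hxy h2 h1 (hx.trans hxy)
    have m3 := mul_nonneg hx h1
    have m4 := mul_nonneg hx h3
    refine ⟨⟨?_, ?_⟩, ?_, ?_⟩ <;> linarith

/-- Rescaled integrand. -/
def fr (m p : ℕ) (r t : ℝ) : ℝ :=
  (1 - t ^ 2) ^ (m + p + m) / ((1 + r * t) ^ (m + p) * (1 - r * t) ^ m)

/-- Limit integrand. -/
def gr (m p : ℕ) (t : ℝ) : ℝ := (1 - t) ^ (m + p) * (1 + t) ^ m

theorem pt_pos (m p : ℕ) (r t : ℝ) (hr0 : 0 ≤ r) (hr1 : r ≤ 1) (ht0 : 0 ≤ t) (ht1 : t < 1) :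
    fr m p r t + fr m p r (-t) ≤ gr m p t + gr m p (-t) := by
  have hrt0 : 0 ≤ r * t := by positivity
  have hrt1 : r * t ≤ t := by nlinarith
  have hA : 0 < 1 + r * t := by linarith
  have hB : 0 < 1 - r * t := by linarith
  obtain ⟨⟨h1, h2⟩, -⟩ := even_mono p (r * t) t hrt0 hrt1
  have hq : 0 ≤ 1 - t ^ 2 := by nlinarith
  have hq' : 1 - t ^ 2 ≤ (1 + r * t) * (1 - r * t) := by nlinarith
  have e1 : fr m p r t + fr m p r (-t) = (1 - t ^ 2) ^ m *
      (((1 - t ^ 2) / ((1 + r * t) * (1 - r * t))) ^ (m + p) *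
      ((1 + r * t) ^ p + (1 - r * t) ^ p)) := by
    have : 1 + r * (-t) = 1 - r * t := by ring
    have h' : 1 - r * (-t) = 1 + r * t := by ring
    unfold fr
    rw [this, h', neg_sq]
    simp only [pow_add, div_pow, mul_pow]
    generalize 1 + r * t = A at hA ⊢
    generalize 1 - r * t = B at hB ⊢
    field_simp
    try ring
  have e2 : gr m p t + gr m p (-t) = (1 - t ^ 2) ^ m * ((1 + t) ^ p + (1 - t) ^ p) := by
    unfold gr
    rw [show (1 : ℝ) - t ^ 2 = (1 + t) * (1 - t) by ring, mul_pow, sub_neg_eq_add,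
      ← sub_eq_add_neg]
    ring
  rw [e1, e2]
  refine mul_le_mul_of_nonneg_left ?_ (pow_nonneg hq _)
  have : ((1 - t ^ 2) / ((1 + r * t) * (1 - r * t))) ^ (m + p) ≤ 1 := by
    apply pow_le_one₀
    · positivity
    · rw [div_le_one (by positivity)]; exact hq'
  calc _ ≤ 1 * ((1 + r * t) ^ p + (1 - r * t) ^ p) := mul_le_mul_of_nonneg_right this h1
    _ ≤ _ := by rw [one_mul]; exact h2

theorem pt (m p : ℕ) (r t : ℝ) (hr0 : 0 ≤ r) (hr1 : r ≤ 1) (ht0 : -1 < t) (ht1 : t < 1) :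
    fr m p r t + fr m p r (-t) ≤ gr m p t + gr m p (-t) := by
  rcases le_total 0 t with h | h
  · exact pt_pos m p r t hr0 hr1 h ht1
  · have := pt_pos m p r (-t) hr0 hr1 (by linarith) (by linarith)
    rw [neg_neg] at this
    linarith

theorem gr_int (m p : ℕ) : ∫ t in (-1:ℝ)..1, gr m p t =
    2 ^ (m + p + m + 1) * ((m.factorial * (m + p).factorial : ℝ) /
      ((m + (m + p) + 1).factorial : ℝ)) := by
  rw [← beta_nat]
  have h := intervalIntegral.smul_integral_comp_mul_add (a := 0) (b := 1) (gr m p) 2 (-1)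
  rw [show (2:ℝ) * 0 + -1 = -1 by norm_num, show (2:ℝ) * 1 + -1 = 1 by norm_num] at h
  rw [← h, pow_succ, mul_comm _ (2:ℝ), mul_assoc, smul_eq_mul,
    ← intervalIntegral.integral_const_mul (2 ^ (m + p + m))]
  refine congrArg _ (intervalIntegral.integral_congr fun x _ => ?_)
  simp only [gr]
  rw [show 1 - (2 * x + -1) = 2 * (1 - x) by ring, show 1 + (2 * x + -1) = 2 * x by ring,
    mul_pow, mul_pow]
  ring

theorem fr_nonneg (m p : ℕ) (r t : ℝ) (hr0 : 0 ≤ r) (hr1 : r ≤ 1) (ht0 : -1 ≤ t) (ht1 : t ≤ 1) :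
    0 ≤ fr m p r t := by
  have : 0 ≤ 1 - t ^ 2 := by nlinarith
  have : 0 ≤ 1 + r * t := by nlinarith
  have : 0 ≤ 1 - r * t := by nlinarith
  unfold fr
  positivity

theorem fr_int_nonneg (m p : ℕ) (r : ℝ) (hr0 : 0 ≤ r) (hr1 : r ≤ 1) :
    0 ≤ ∫ t in (-1:ℝ)..1, fr m p r t :=
  intervalIntegral.integral_nonneg (by norm_num)
    fun t ht => fr_nonneg m p r t hr0 hr1 ht.1 ht.2

theorem fr_int_le (m p : ℕ) (r : ℝ) (hr0 : 0 ≤ r) (hr1 : r ≤ 1) :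
    ∫ t in (-1:ℝ)..1, fr m p r t ≤ ∫ t in (-1:ℝ)..1, gr m p t := by
  by_cases hi : IntervalIntegrable (fr m p r) volume (-1) 1
  · have hi' : IntervalIntegrable (fun t => fr m p r (-t)) volume (-1) 1 := by
      have := (IntervalIntegrable.iff_comp_neg (by simp)).1 hi
      rw [neg_neg] at this
      exact this.symm
    have hc : Continuous (gr m p) := by unfold gr; fun_prop
    have hg : IntervalIntegrable (gr m p) volume (-1) 1 := hc.intervalIntegrable _ _
    have hg' : IntervalIntegrable (fun t => gr m p (-t)) volume (-1) 1 :=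
      (hc.comp continuous_neg).intervalIntegrable _ _
    have h := intervalIntegral.integral_mono_on_of_le_Ioo (by norm_num) (hi.add hi')
      (hg.add hg') (fun t ht => pt m p r t hr0 hr1 ht.1 ht.2)
    rw [intervalIntegral.integral_add hi hi', intervalIntegral.integral_add hg hg',
      intervalIntegral.integral_comp_neg, intervalIntegral.integral_comp_neg, neg_neg] at h
    linarith
  · rw [intervalIntegral.integral_undef hi, gr_int]
    positivity

theorem J_eq (m p : ℕ) (a s : ℝ) (hs : 0 < s) (hsa : s ^ 2 = 1 / 4 - a) :
    ∫ x in (1 / 2 - s)..(1 / 2 + s),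
      (x * (1 - x) - a) ^ (m + p + m) / (x ^ (m + p) * (1 - x) ^ m) =
    s ^ (2 * (m + p + m) + 1) * 2 ^ (m + p + m) * ∫ t in (-1:ℝ)..1, fr m p (2 * s) t := by
  have h := intervalIntegral.smul_integral_comp_mul_add (a := -1) (b := 1)
    (fun x : ℝ => (x * (1 - x) - a) ^ (m + p + m) / (x ^ (m + p) * (1 - x) ^ m)) s (1 / 2)
  rw [show s * -1 + 1 / 2 = 1 / 2 - s by ring, show s * 1 + 1 / 2 = 1 / 2 + s by ring] at h
  rw [← h, pow_succ, mul_comm _ s, mul_assoc, mul_assoc, smul_eq_mul, ← mul_assoc (_ ^ _),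
    ← intervalIntegral.integral_const_mul (s ^ (2 * (m + p + m)) * 2 ^ (m + p + m))]
  refine congrArg _ (intervalIntegral.integral_congr fun t _ => ?_)
  simp only [fr]
  rw [show (s * t + 1 / 2) * (1 - (s * t + 1 / 2)) - a = s ^ 2 * (1 - t ^ 2) by
      rw [show a = 1 / 4 - s ^ 2 by linarith]; ring,
    show s * t + 1 / 2 = (1 + 2 * s * t) * (1 / 2) by ring,
    show 1 - (1 + 2 * s * t) * (1 / 2) = (1 - 2 * s * t) * (1 / 2) by ring,
    mul_pow, mul_pow, mul_pow, pow_mul, mul_mul_mul_comm, ← pow_add,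
    div_mul_eq_div_div _ _ ((1 / 2 : ℝ) ^ _), one_div, inv_pow, div_inv_eq_mul]
  ring

theorem stmt18 (d D : ℕ) (hd1 : 1 < d) (hd2 : d + 1 < D) (hD : 2 * d + 2 < D)
    (a : ℝ) (ha0 : 0 ≤ a) (ha1 : a < 1 / 4) :
    0 ≤ Jfun d D a ∧
      Jfun d D a ≤ (1 - 4 * a) ^ ((D : ℝ) - 3 / 2) ∧
      (1 - 4 * a) ^ ((D : ℝ) - 3 / 2) ≤ Real.exp (-(4 * a * ((D : ℝ) - 3 / 2))) := by
  obtain ⟨m, rfl⟩ : ∃ m, d = m + 1 := ⟨d - 1, by omega⟩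
  obtain ⟨p, rfl⟩ : ∃ p, D = m + p + m + 2 := ⟨D - 2 - 2 * m, by omega⟩
  have hq : 0 < 1 - 4 * a := by linarith
  set s := Real.sqrt (1 / 4 - a) with hs
  have hs0 : 0 < s := Real.sqrt_pos.2 (by linarith)
  have hsa : s ^ 2 = 1 / 4 - a := Real.sq_sqrt (by linarith)
  have hs1 : 2 * s ≤ 1 := by nlinarith
  have hJ : Jfun (m + 1) (m + p + m + 2) a =
      ((m + (m + p) + 1).factorial : ℝ) / (m.factorial * (m + p).factorial) *
      (s ^ (2 * (m + p + m) + 1) * 2 ^ (m + p + m) * ∫ t in (-1:ℝ)..1, fr m p (2 * s) t) := by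
    rw [← J_eq m p a s hs0 hsa, Jfun, ← hs]
    rw [show m + p + m + 2 - 1 = m + (m + p) + 1 by omega,
      show m + p + m + 2 - (m + 1) - 1 = m + p by omega,
      show m + p + m + 2 - 2 = m + p + m by omega, show m + 1 - 1 = m by omega]
  have hpow : (1 - 4 * a) ^ (((m + p + m + 2 : ℕ) : ℝ) - 3 / 2)
      = (2 * s) ^ (2 * (m + p + m) + 1) := by
    rw [show 1 - 4 * a = (2 * s) ^ (2 : ℝ) by
      rw [Real.rpow_two, mul_pow, hsa]; ring, ← Real.rpow_mul (by positivity),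
      ← Real.rpow_natCast]
    congr 1
    push_cast
    ring
  refine ⟨?_, ?_, ?_⟩
  · rw [hJ]
    have := fr_int_nonneg m p (2 * s) (by positivity) hs1
    positivity
  · rw [hpow, hJ]
    have h := fr_int_le m p (2 * s) (by positivity) hs1
    rw [gr_int] at h
    have f1 : ((m.factorial : ℕ) : ℝ) ≠ 0 := by positivity
    have f2 : (((m + p).factorial : ℕ) : ℝ) ≠ 0 := by positivity
    have f3 : (((m + (m + p) + 1).factorial : ℕ) : ℝ) ≠ 0 := by positivity
    calc _ ≤ ((m + (m + p) + 1).factorial : ℝ) / (m.factorial * (m + p).factorial) *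
      (s ^ (2 * (m + p + m) + 1) * 2 ^ (m + p + m) * (2 ^ (m + p + m + 1) *
        ((m.factorial * (m + p).factorial : ℝ) / ((m + (m + p) + 1).factorial : ℝ)))) := by
          gcongr
      _ = s ^ (2 * (m + p + m) + 1) * (2 ^ (m + p + m) * 2 ^ (m + p + m + 1)) := by
          field_simp
      _ = _ := by
          rw [← pow_add, mul_pow, mul_comm]
          congr 2
          ring
  · rw [Real.rpow_def_of_pos hq]
    apply Real.exp_le_exp.2
    have h1 := Real.log_le_sub_one_of_pos hq
    have h2 : (0 : ℝ) ≤ ((m + p + m + 2 : ℕ) : ℝ) - 3 / 2 := by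
      push_cast
      have : (0 : ℝ) ≤ (m : ℝ) := by positivity
      have : (0 : ℝ) ≤ (p : ℝ) := by positivity
      linarith
    have h3 : Real.log (1 - 4 * a) ≤ -(4 * a) := by linarith
    have := mul_le_mul_of_nonneg_right h3 h2
    linarith
end
end

section
/- Let d, D be integers with 3 < d, D > 2d + 2 and (log D)/D < 1/5. Let φ_1,…,φ_D be any orthonormal basis of ℂ^D and let P be an orthogonal projection of rank d onto a coordinate subspace. Then ∫_{U(D)} max_{1 ≤ α ≠ β ≤ D} |⟨φ_α, U P U⁻¹ φ_β⟩|² dμ(U) < (log D)/D, where μ is the Haar probability measure on U(D). -/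
open MeasureTheory Filter

noncomputable section

lemma phase_avg (c : ℝ) (hc : 0 < c) (z a : ℂ) (h : c * ‖a‖ ^ 2 < 1) :
    (Real.exp (c * ‖z + a‖ ^ 2) + Real.exp (c * ‖z + (-1) * a‖ ^ 2)
      + Real.exp (c * ‖z + Complex.I * a‖ ^ 2) + Real.exp (c * ‖z + (-Complex.I) * a‖ ^ 2)) / 4
    ≤ (1 - c * ‖a‖ ^ 2)⁻¹ * Real.exp (c / (1 - c * ‖a‖ ^ 2) * ‖z‖ ^ 2) := by
  set b := ‖a‖ ^ 2 with hb
  have hb0 : 0 ≤ b := by positivity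
  set x := z.re * a.re + z.im * a.im with hx
  set y := z.im * a.re - z.re * a.im with hy
  have hxy : x ^ 2 + y ^ 2 = ‖z‖ ^ 2 * b := by
    rw [hb, Complex.sq_norm, Complex.sq_norm, Complex.normSq_apply, Complex.normSq_apply]
    ring
  have e1 : ‖z + a‖ ^ 2 = ‖z‖ ^ 2 + b + 2 * x := by
    rw [hb]; simp only [Complex.sq_norm, Complex.normSq_apply]; simp; ring
  have e2 : ‖z + (-1) * a‖ ^ 2 = ‖z‖ ^ 2 + b - 2 * x := by
    rw [hb]; simp only [Complex.sq_norm, Complex.normSq_apply]; simp; ring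
  have e3 : ‖z + Complex.I * a‖ ^ 2 = ‖z‖ ^ 2 + b + 2 * y := by
    rw [hb]; simp only [Complex.sq_norm, Complex.normSq_apply]; simp; ring
  have e4 : ‖z + (-Complex.I) * a‖ ^ 2 = ‖z‖ ^ 2 + b - 2 * y := by
    rw [hb]; simp only [Complex.sq_norm, Complex.normSq_apply]; simp; ring
  rw [e1, e2, e3, e4]
  have h1 := Real.cosh_le_exp_half_sq (c * x + c * y)
  have h2 := Real.cosh_le_exp_half_sq (c * x - c * y)
  have h3 : Real.cosh (c * x + c * y) * Real.cosh (c * x - c * y)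
      ≤ Real.exp (c ^ 2 * (‖z‖ ^ 2 * b)) := by
    refine (mul_le_mul h1 h2 (Real.cosh_pos _).le (Real.exp_pos _).le).trans_eq ?_
    rw [← Real.exp_add, ← hxy]; congr 1; ring
  have h4 : (Real.exp (c * (‖z‖ ^ 2 + b + 2 * x)) + Real.exp (c * (‖z‖ ^ 2 + b - 2 * x))
      + Real.exp (c * (‖z‖ ^ 2 + b + 2 * y)) + Real.exp (c * (‖z‖ ^ 2 + b - 2 * y))) / 4
      = Real.exp (c * (‖z‖ ^ 2 + b)) * (Real.cosh (c * x + c * y) * Real.cosh (c * x - c * y)) := by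
    rw [Real.cosh_eq, Real.cosh_eq]
    have : ∀ p q r s E : ℝ, E * ((p + q) / 2 * ((r + s) / 2))
      = (E * (p * r) + E * (q * s) + E * (p * s) + E * (q * r)) / 4 := by intros; ring
    rw [this]
    simp only [← Real.exp_add]
    congr 1
    ring_nf
  rw [h4]
  have hpos : 0 < 1 - c * b := by linarith
  have h5 : Real.exp (c * b) ≤ (1 - c * b)⁻¹ := by
    rw [← neg_neg (c * b), Real.exp_neg, neg_neg]
    apply inv_anti₀ hpos
    have := Real.add_one_le_exp (-(c * b)); linarith
  have h6 : c + c ^ 2 * b ≤ c / (1 - c * b) := by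
    rw [le_div_iff₀ hpos]
    have : 0 ≤ c * (c * b) ^ 2 := by positivity
    nlinarith
  calc _ ≤ Real.exp (c * (‖z‖ ^ 2 + b)) * Real.exp (c ^ 2 * (‖z‖ ^ 2 * b)) := by gcongr
    _ = Real.exp (c * b) * Real.exp ((c + c ^ 2 * b) * ‖z‖ ^ 2) := by
      rw [← Real.exp_add, ← Real.exp_add]; congr 1; ring
    _ ≤ _ := by gcongr

lemma rotProj_mul {D : ℕ} (V U : UG D) (P : Matrix (Fin D) (Fin D) ℂ) :
    rotProj (V * U) P = (V : Matrix (Fin D) (Fin D) ℂ) * rotProj U P *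
      star (V : Matrix (Fin D) (Fin D) ℂ) := by
  simp only [rotProj, mul_inv_rev, Submonoid.coe_mul, Matrix.mul_assoc]
  rfl

lemma rotProj_row {D : ℕ} (V U : UG D) (P : Matrix (Fin D) (Fin D) ℂ) (α k : Fin D)
    (hV : ∀ j, (V : Matrix (Fin D) (Fin D) ℂ) α j = if j = α then 1 else 0) :
    rotProj (V * U) P α k = ∑ j, rotProj U P α j *
      (starRingEnd ℂ) ((V : Matrix (Fin D) (Fin D) ℂ) k j) := by
  rw [rotProj_mul, Matrix.mul_apply]
  refine Finset.sum_congr rfl fun j _ => ?_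
  rw [Matrix.mul_apply]
  simp [hV, Matrix.star_apply]

lemma rotProj_continuous {D : ℕ} (P : Matrix (Fin D) (Fin D) ℂ) (α k : Fin D) :
    Continuous fun U : UG D => rotProj U P α k := by
  have : Continuous fun U : UG D => rotProj U P := by
    unfold rotProj
    fun_prop
  exact this.matrix_elem α k

lemma row_bound {D : ℕ} (s : Finset (Fin D)) (U : UG D) (α : Fin D) :
    ∑ j ∈ Finset.univ.erase α, ‖rotProj U (coordProj D s) α j‖ ^ 2 ≤ 1 / 4 := by
  set Q := rotProj U (coordProj D s) with hQ
  have hU : ((U⁻¹ : UG D) : Matrix (Fin D) (Fin D) ℂ) = star (U : Matrix (Fin D) (Fin D) ℂ) := rfl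
  have hUU : star (U : Matrix (Fin D) (Fin D) ℂ) * (U : Matrix (Fin D) (Fin D) ℂ) = 1 :=
    Matrix.UnitaryGroup.star_mul_self U
  have hP1 : star (coordProj D s) = coordProj D s := by
    rw [coordProj, Matrix.star_eq_conjTranspose, Matrix.diagonal_conjTranspose]
    congr 1; ext i; simp [Pi.star_apply, apply_ite]
  have hP2 : coordProj D s * coordProj D s = coordProj D s := by
    rw [coordProj, Matrix.diagonal_mul_diagonal]
    congr 1; ext i; split_ifs <;> simp
  have hQ1 : star Q = Q := by
    rw [hQ, rotProj, hU]; simp [hP1, Matrix.mul_assoc]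
  have hQ2 : Q * Q = Q := by
    rw [hQ, rotProj, hU]
    calc _ = (U : Matrix (Fin D) (Fin D) ℂ) * (coordProj D s * (star (U : Matrix (Fin D) (Fin D) ℂ) * (U : Matrix (Fin D) (Fin D) ℂ)) * coordProj D s) * star (U : Matrix (Fin D) (Fin D) ℂ) := by
          simp only [Matrix.mul_assoc]
      _ = _ := by rw [hUU, Matrix.mul_one, hP2]
  have hsym : ∀ i j, (starRingEnd ℂ) (Q i j) = Q j i := by
    intro i j
    conv_rhs => rw [← hQ1]
    rfl
  have h1 : Q α α = ((∑ j, ‖Q α j‖ ^ 2 : ℝ) : ℂ) := by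
    conv_lhs => rw [← hQ2]
    rw [Matrix.mul_apply]
    push_cast
    refine Finset.sum_congr rfl fun j _ => ?_
    rw [← hsym α j, Complex.mul_conj']
  set q := ∑ j, ‖Q α j‖ ^ 2 with hq
  have h2 : ‖Q α α‖ ^ 2 = q ^ 2 := by
    rw [h1, Complex.norm_real, Real.norm_eq_abs, sq_abs]
  have h3 := Finset.add_sum_erase Finset.univ (fun j => ‖Q α j‖ ^ 2) (Finset.mem_univ α)
  rw [h2, ← hq] at h3
  nlinarith [sq_nonneg (q - 1 / 2)]

/-- diagonal phase -/
def phaseU {D : ℕ} (j : Fin D) (p : ℂ) (hp : p * (starRingEnd ℂ) p = 1) : UG D :=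
  ⟨Matrix.diagonal (fun i => if i = j then p else 1), by
    rw [Matrix.mem_unitaryGroup_iff, Matrix.star_eq_conjTranspose, Matrix.diagonal_conjTranspose,
      Matrix.diagonal_mul_diagonal, ← Matrix.diagonal_one]
    congr 1; ext i
    by_cases h : i = j <;> simp [h, hp]⟩

lemma phaseU_row {D : ℕ} (j α : Fin D) (hj : j ≠ α) (p : ℂ) (hp : p * (starRingEnd ℂ) p = 1)
    (U : UG D) (P : Matrix (Fin D) (Fin D) ℂ) (k : Fin D) :
    rotProj (phaseU j p hp * U) P α k =
      (if k = j then (starRingEnd ℂ) p else 1) * rotProj U P α k := by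
  rw [rotProj_row]
  · rw [Finset.sum_eq_single k]
    · simp only [phaseU, Matrix.diagonal_apply_eq]
      split_ifs <;> simp [mul_comm]
    · intro b _ hb
      simp [phaseU, Matrix.diagonal_apply_ne _ hb.symm]
    · simp
  · intro i
    by_cases h : i = α
    · subst h; simp [phaseU, hj.symm]
    · simp [phaseU, h, Matrix.diagonal_apply_ne _ (Ne.symm h)]

/-- Householder reflection -/
lemma exists_flat {D : ℕ} (hD : 3 ≤ D) (α β : Fin D) (hαβ : α ≠ β) :
    ∃ F : UG D, (∀ j, (F : Matrix (Fin D) (Fin D) ℂ) α j = if j = α then 1 else 0) ∧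
      ∀ j, (F : Matrix (Fin D) (Fin D) ℂ) β j =
        if j = α then 0 else (((√((D : ℝ) - 1))⁻¹ : ℝ) : ℂ) := by
  set r : ℝ := (√((D : ℝ) - 1))⁻¹ with hr
  have hD' : (3 : ℝ) ≤ D := by exact_mod_cast hD
  have hr2 : r ^ 2 * ((D : ℝ) - 1) = 1 := by
    rw [hr, inv_pow, Real.sq_sqrt (by linarith)]
    exact inv_mul_cancel₀ (by linarith)
  have hr1 : r ≠ 1 := by
    intro h; rw [h] at hr2; linarith
  have hr1' : (1 - (r : ℂ)) ≠ 0 := by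
    rw [sub_ne_zero]; exact_mod_cast hr1.symm
  set w : Fin D → ℂ := fun j => if j = α then 0 else (if j = β then 1 else 0) - (r : ℂ) with hw
  have hww : w ⬝ᵥ w = 2 * (1 - r) := by
    have h1 : ∀ j, w j * w j = (if j = α then 0 else (r : ℂ) ^ 2) +
        (if j = β then 1 - 2 * (r : ℂ) else 0) := by
      intro j
      by_cases h : j = α
      · have : j ≠ β := by rw [h]; exact hαβ
        simp [hw, h, hαβ]
      · by_cases h' : j = β
        · simp [hw, hαβ.symm, h']; ring
        · simp [hw, h, h']; ring
    have h2 : ∑ j : Fin D, (if j = α then 0 else (r : ℂ) ^ 2) = (r : ℂ) ^ 2 * ((D : ℂ) - 1) := by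
      have : ∀ j : Fin D, (if j = α then 0 else (r : ℂ) ^ 2)
          = (r : ℂ) ^ 2 - (if j = α then (r : ℂ) ^ 2 else 0) := by
        intro j; split_ifs <;> simp
      simp only [this, Finset.sum_sub_distrib]
      simp; ring
    have h3 : (r : ℂ) ^ 2 * ((D : ℂ) - 1) = 1 := by exact_mod_cast hr2
    rw [dotProduct]
    simp only [h1, Finset.sum_add_distrib, h2, h3]
    simp; ring
  have hstar : star w = w := by
    ext j; simp only [hw, Pi.star_apply]; split_ifs <;> simp
  set F : Matrix (Fin D) (Fin D) ℂ := 1 - (1 - (r : ℂ))⁻¹ • Matrix.vecMulVec w w with hF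
  have hFs : star F = F := by
    rw [hF, star_sub, star_one, star_smul, Matrix.star_eq_conjTranspose,
      Matrix.conjTranspose_vecMulVec, hstar]
    simp
  have hFF : F * star F = 1 := by
    rw [hFs, hF, sub_mul, mul_sub, mul_sub, one_mul, mul_one, one_mul, smul_mul_smul_comm,
      Matrix.vecMulVec_mul_vecMulVec, hww]
    have : Matrix.vecMulVec w ((2 * (1 - (r:ℂ))) • w) = (2 * (1 - (r:ℂ))) • Matrix.vecMulVec w w := by
      ext i j; simp [Matrix.vecMulVec_apply]; ring
    rw [this, smul_smul]
    have : (1 - (r:ℂ))⁻¹ * (1 - (r:ℂ))⁻¹ * (2 * (1 - (r:ℂ))) = (1 - (r:ℂ))⁻¹ + (1 - (r:ℂ))⁻¹ := by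
      field_simp; ring
    rw [this, add_smul]; abel
  refine ⟨⟨F, Matrix.mem_unitaryGroup_iff.2 hFF⟩, ?_, ?_⟩
  · intro j
    simp [hF, Matrix.vecMulVec_apply, hw, Matrix.one_apply, eq_comm]
  · intro j
    simp only [hF, Matrix.sub_apply, Matrix.smul_apply, Matrix.vecMulVec_apply, hw,
      Matrix.one_apply]
    by_cases h : j = α
    · simp [h, hαβ.symm]
    · by_cases h' : j = β
      · subst h'; simp [h]; field_simp; ring
      · simp [h, h', hαβ.symm, Ne.symm h']; field_simp

def rowA {D : ℕ} (s : Finset (Fin D)) (r : ℝ) (α : Fin D) (T : Finset (Fin D)) (U : UG D) : ℝ :=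
  ∑ j ∈ T, ‖(r : ℂ) * rotProj U (coordProj D s) α j‖ ^ 2

def rowS {D : ℕ} (s : Finset (Fin D)) (r : ℝ) (α : Fin D) (T : Finset (Fin D)) (U : UG D) : ℂ :=
  ∑ j ∈ T, (r : ℂ) * rotProj U (coordProj D s) α j

def rowF {D : ℕ} (s : Finset (Fin D)) (r c : ℝ) (α : Fin D) (T : Finset (Fin D)) (U : UG D) : ℝ :=
  (1 - c * rowA s r α T U)⁻¹ *
    Real.exp (c / (1 - c * rowA s r α T U) * ‖rowS s r α (Finset.univ.erase α \ T) U‖ ^ 2)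

lemma rowA_le {D : ℕ} (s : Finset (Fin D)) (r c : ℝ) (hc : 0 < c) (hrc : c * r ^ 2 ≤ 3)
    (α : Fin D) (T : Finset (Fin D)) (hT : T ⊆ Finset.univ.erase α) (U : UG D) :
    c * rowA s r α T U ≤ 3 / 4 := by
  have h1 := row_bound s U α
  have h2 : rowA s r α T U ≤ r ^ 2 * (1 / 4) := by
    refine le_trans ?_ (mul_le_mul_of_nonneg_left h1 (sq_nonneg r))
    rw [rowA, Finset.mul_sum]
    refine (Finset.sum_le_sum_of_subset_of_nonneg hT (fun _ _ _ => by positivity)).trans_eq ?_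
    refine Finset.sum_congr rfl fun j _ => ?_
    rw [norm_mul, mul_pow, Complex.norm_real, Real.norm_eq_abs, sq_abs]
  nlinarith

lemma rowA_nonneg {D : ℕ} (s : Finset (Fin D)) (r : ℝ) (α : Fin D) (T : Finset (Fin D))
    (U : UG D) : 0 ≤ rowA s r α T U := Finset.sum_nonneg fun _ _ => by positivity

lemma rowA_cont {D : ℕ} (s : Finset (Fin D)) (r : ℝ) (α : Fin D) (T : Finset (Fin D)) :
    Continuous (rowA s r α T) := by
  unfold rowA
  have := fun j => rotProj_continuous (coordProj D s) α j
  fun_prop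

lemma rowS_cont {D : ℕ} (s : Finset (Fin D)) (r : ℝ) (α : Fin D) (T : Finset (Fin D)) :
    Continuous (rowS s r α T) := by
  unfold rowS
  have := fun j => rotProj_continuous (coordProj D s) α j
  fun_prop

lemma rowS_bound {D : ℕ} (s : Finset (Fin D)) (r : ℝ) (α : Fin D) (T : Finset (Fin D))
    (hT : T ⊆ Finset.univ.erase α) (U : UG D) :
    ‖rowS s r α T U‖ ≤ D * |r| := by
  rw [rowS]
  refine (norm_sum_le _ _).trans ?_
  have : ∀ j ∈ T, ‖(r : ℂ) * rotProj U (coordProj D s) α j‖ ≤ |r| := by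
    intro j hj
    rw [norm_mul, Complex.norm_real, Real.norm_eq_abs]
    have h1 := row_bound s U α
    have h2 := Finset.single_le_sum (f := fun j => ‖rotProj U (coordProj D s) α j‖ ^ 2)
      (fun _ _ => by positivity) (hT hj)
    have h3 : ‖rotProj U (coordProj D s) α j‖ ≤ 1 := by
      nlinarith [norm_nonneg (rotProj U (coordProj D s) α j)]
    exact mul_le_of_le_one_right (abs_nonneg r) h3
  refine (Finset.sum_le_card_nsmul _ _ _ this).trans ?_
  rw [nsmul_eq_mul]
  gcongr
  simpa using Finset.card_le_univ T

lemma rowF_integrable {D : ℕ} (s : Finset (Fin D)) (r c : ℝ) (hc : 0 < c) (hrc : c * r ^ 2 ≤ 3)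
    (α : Fin D) (T : Finset (Fin D)) (hT : T ⊆ Finset.univ.erase α)
    (μ : Measure (UG D)) [IsProbabilityMeasure μ] : Integrable (rowF s r c α T) μ := by
  have hA := rowA_le s r c hc hrc α T hT
  have hne : ∀ U, 1 - c * rowA s r α T U ≠ 0 := fun U => by have := hA U; linarith
  have hcont : Continuous (rowF s r c α T) := by
    unfold rowF
    have h1 := rowA_cont s r α T
    have h2 := rowS_cont s r α (Finset.univ.erase α \ T)
    have h3 : Continuous fun U => 1 - c * rowA s r α T U := by fun_prop
    exact (h3.inv₀ hne).mul (Real.continuous_exp.comp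
      ((continuous_const.div h3 hne).mul (h2.norm.pow 2)))
  refine Integrable.of_bound hcont.aestronglyMeasurable
    (4 * Real.exp (c * 4 * (D * |r|) ^ 2)) (Eventually.of_forall fun U => ?_)
  have hU := hA U
  have hpos : (1 / 4 : ℝ) ≤ 1 - c * rowA s r α T U := by linarith
  have hinv : (1 - c * rowA s r α T U)⁻¹ ≤ 4 := by
    refine (inv_anti₀ (by norm_num) hpos).trans_eq (by norm_num)
  have hinv0 : 0 ≤ (1 - c * rowA s r α T U)⁻¹ := inv_nonneg.2 (by linarith)
  have hS := rowS_bound s r α (Finset.univ.erase α \ T) Finset.sdiff_subset U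
  rw [rowF, Real.norm_eq_abs, abs_of_nonneg (by positivity), div_eq_mul_inv]
  gcongr

lemma rowF_phase {D : ℕ} (s : Finset (Fin D)) (r c : ℝ) (α j : Fin D) (T : Finset (Fin D))
    (hj : j ≠ α) (hjT : j ∉ T) (p : ℂ) (hp : p * (starRingEnd ℂ) p = 1) (U : UG D) :
    rowF s r c α T (phaseU j p hp * U) = (1 - c * rowA s r α T U)⁻¹ *
    Real.exp (c / (1 - c * rowA s r α T U) * ‖rowS s r α (Finset.univ.erase α \ insert j T) U +
      (starRingEnd ℂ) p * (r * rotProj U (coordProj D s) α j)‖ ^ 2) := by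
  have h1 : rowA s r α T (phaseU j p hp * U) = rowA s r α T U := by
    refine Finset.sum_congr rfl fun k hk => ?_
    rw [phaseU_row j α hj, if_neg (by rintro rfl; exact hjT hk), one_mul]
  have h2 : rowS s r α (Finset.univ.erase α \ T) (phaseU j p hp * U) =
      rowS s r α (Finset.univ.erase α \ insert j T) U +
      (starRingEnd ℂ) p * (r * rotProj U (coordProj D s) α j) := by
    have : Finset.univ.erase α \ T = insert j (Finset.univ.erase α \ insert j T) := by
      ext k; by_cases h : k = j
      · subst h; simp [hj, hjT]
      · simp [h]
    rw [rowS, this, Finset.sum_insert (by simp), add_comm]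
    congr 1
    · refine Finset.sum_congr rfl fun k hk => ?_
      rw [phaseU_row j α hj, if_neg (by rintro rfl; simp at hk), one_mul]
    · rw [phaseU_row j α hj, if_pos rfl]; ring
  rw [rowF, h1, h2]

lemma rowF_step {D : ℕ} (s : Finset (Fin D)) (r c : ℝ) (hc : 0 < c) (hrc : c * r ^ 2 ≤ 3)
    (α j : Fin D) (T : Finset (Fin D)) (hT : insert j T ⊆ Finset.univ.erase α) (hjT : j ∉ T)
    (μ : Measure (UG D)) [μ.IsHaarMeasure] [IsProbabilityMeasure μ] :
    ∫ U, rowF s r c α T U ∂μ ≤ ∫ U, rowF s r c α (insert j T) U ∂μ := by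
  have hj : j ≠ α := (Finset.mem_erase.1 (hT (Finset.mem_insert_self j T))).1
  have hT' : T ⊆ Finset.univ.erase α := (Finset.subset_insert j T).trans hT
  have q1 : (1 : ℂ) * (starRingEnd ℂ) 1 = 1 := by simp
  have q2 : (-1 : ℂ) * (starRingEnd ℂ) (-1) = 1 := by simp
  have q3 : (Complex.I : ℂ) * (starRingEnd ℂ) Complex.I = 1 := by simp
  have q4 : (-Complex.I : ℂ) * (starRingEnd ℂ) (-Complex.I) = 1 := by simp
  have hI := rowF_integrable s r c hc hrc α T hT' μ
  have e : ∀ V : UG D, ∫ U, rowF s r c α T (V * U) ∂μ = ∫ U, rowF s r c α T U ∂μ :=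
    fun V => integral_mul_left_eq_self _ V
  have i : ∀ V : UG D, Integrable (fun U => rowF s r c α T (V * U)) μ :=
    fun V => hI.comp_mul_left V
  have key : ∫ U, rowF s r c α T U ∂μ = ∫ U, (rowF s r c α T (phaseU j 1 q1 * U)
      + rowF s r c α T (phaseU j (-1) q2 * U) + rowF s r c α T (phaseU j (-Complex.I) q4 * U)
      + rowF s r c α T (phaseU j Complex.I q3 * U)) / 4 ∂μ := by
    have a2 : ∀ V W : UG D, Integrable (fun U => rowF s r c α T (V * U) +
        rowF s r c α T (W * U)) μ := fun V W => (i V).add (i W)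
    have a3 : ∀ V W X : UG D, Integrable (fun U => rowF s r c α T (V * U) +
        rowF s r c α T (W * U) + rowF s r c α T (X * U)) μ := fun V W X => (a2 V W).add (i X)
    rw [integral_div, integral_add (a3 _ _ _) (i _),
      integral_add (a2 _ _) (i _), integral_add (i _) (i _), e, e, e, e]
    ring
  rw [key]
  refine integral_mono ((((i _).add (i _)).add (i _)).add (i _) |>.div_const 4)
    (rowF_integrable s r c hc hrc α _ hT μ) fun U => ?_
  simp only [rowF_phase s r c α j T hj hjT]
  have hA1 := rowA_le s r c hc hrc α _ hT U
  have hA := rowA_le s r c hc hrc α _ hT' U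
  have hins : rowA s r α (insert j T) U
      = rowA s r α T U + ‖(r : ℂ) * rotProj U (coordProj D s) α j‖ ^ 2 := by
    rw [rowA, Finset.sum_insert hjT, add_comm]; rfl
  rw [rowF]
  rw [hins] at hA1 ⊢
  set A := rowA s r α T U
  set a := (r : ℂ) * rotProj U (coordProj D s) α j
  set z := rowS s r α (Finset.univ.erase α \ insert j T) U
  have hpos : 0 < 1 - c * A := by linarith
  have hpos2 : 0 < 1 - c * (A + ‖a‖ ^ 2) := by linarith
  have hlt : c / (1 - c * A) * ‖a‖ ^ 2 < 1 := by
    rw [div_mul_eq_mul_div, div_lt_one hpos]; linarith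
  have hph := phase_avg (c / (1 - c * A)) (by positivity) z a hlt
  have hmul : 1 - c / (1 - c * A) * ‖a‖ ^ 2 = (1 - c * (A + ‖a‖ ^ 2)) / (1 - c * A) := by
    field_simp; ring
  have hd : c / (1 - c * A) / ((1 - c * (A + ‖a‖ ^ 2)) / (1 - c * A)) = c / (1 - c * (A + ‖a‖ ^ 2)) := by
    field_simp
  rw [hmul, hd] at hph
  have := mul_le_mul_of_nonneg_left hph (inv_nonneg.2 hpos.le)
  refine le_trans (le_of_eq ?_) (this.trans_eq ?_)
  · simp only [map_one, map_neg, Complex.conj_I, neg_neg, one_mul]; ring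
  · rw [← mul_assoc]; congr 1; field_simp

lemma rowF_le {D : ℕ} (s : Finset (Fin D)) (r c : ℝ) (hc : 0 < c) (hrc : c * r ^ 2 ≤ 3)
    (α : Fin D) (μ : Measure (UG D)) [μ.IsHaarMeasure] [IsProbabilityMeasure μ]
    (T : Finset (Fin D)) (hT : T ⊆ Finset.univ.erase α) :
    ∫ U, rowF s r c α ∅ U ∂μ ≤ ∫ U, rowF s r c α T U ∂μ := by
  induction T using Finset.induction_on with
  | empty => exact le_rfl
  | insert j T hj ih =>
    exact (ih ((Finset.subset_insert j T).trans hT)).trans (rowF_step s r c hc hrc α j T hT hj μ)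

lemma rowF_empty {D : ℕ} (s : Finset (Fin D)) (r c : ℝ) (hc : 0 < c) (hrc : c * r ^ 2 ≤ 3)
    (α : Fin D) (μ : Measure (UG D)) [μ.IsHaarMeasure] [IsProbabilityMeasure μ] :
    ∫ U, Real.exp (c * ‖rowS s r α (Finset.univ.erase α) U‖ ^ 2) ∂μ ≤ 4 := by
  have h := rowF_le s r c hc hrc α μ _ (subset_refl _)
  have h1 : ∀ U, rowF s r c α ∅ U = Real.exp (c * ‖rowS s r α (Finset.univ.erase α) U‖ ^ 2) := by
    intro U; simp [rowF, rowA]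
  simp only [h1] at h
  refine h.trans ?_
  have h2 : ∀ U, rowF s r c α (Finset.univ.erase α) U ≤ 4 := by
    intro U
    have hA := rowA_le s r c hc hrc α _ (subset_refl _) U
    simp only [rowF, sdiff_self, rowS]
    have hpos : (1 / 4 : ℝ) ≤ 1 - c * rowA s r α (Finset.univ.erase α) U := by linarith
    have hinv : (1 - c * rowA s r α (Finset.univ.erase α) U)⁻¹ ≤ 4 := by
      refine (inv_anti₀ (by norm_num) hpos).trans_eq (by norm_num)
    simpa using hinv
  refine (integral_mono (rowF_integrable s r c hc hrc α _ (subset_refl _) μ)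
    (integrable_const 4) h2).trans_eq ?_
  simp

lemma entry_mgf {D : ℕ} (hD : 3 ≤ D) (s : Finset (Fin D)) (α β : Fin D) (hαβ : α ≠ β)
    (μ : Measure (UG D)) [μ.IsHaarMeasure] [IsProbabilityMeasure μ] :
    ∫ U, Real.exp (3 * ((D : ℝ) - 1) * ‖rotProj U (coordProj D s) α β‖ ^ 2) ∂μ ≤ 4 := by
  obtain ⟨F, hF1, hF2⟩ := exists_flat hD α β hαβ
  have hD' : (3 : ℝ) ≤ D := by exact_mod_cast hD
  rw [← integral_mul_left_eq_self _ F]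
  have : ∀ U, rotProj (F * U) (coordProj D s) α β
      = rowS s (√((D : ℝ) - 1))⁻¹ α (Finset.univ.erase α) U := by
    intro U
    rw [rotProj_row F U _ α β hF1, rowS, ← Finset.add_sum_erase _ _ (Finset.mem_univ α)]
    rw [hF2, if_pos rfl, map_zero, mul_zero, zero_add]
    refine Finset.sum_congr rfl fun j hj => ?_
    rw [hF2, if_neg (Finset.mem_erase.1 hj).1, Complex.conj_ofReal, mul_comm]
  simp only [this]
  refine rowF_empty s _ _ (by linarith) ?_ α μ
  rw [inv_pow, Real.sq_sqrt (by linarith), mul_assoc, mul_inv_cancel₀ (by linarith)]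
  norm_num

lemma entry_le {D : ℕ} (s : Finset (Fin D)) (α β : Fin D) (h : α ≠ β) (U : UG D) :
    ‖rotProj U (coordProj D s) α β‖ ^ 2 ≤ 1 := by
  have h1 := row_bound s U α
  have h2 := Finset.single_le_sum (f := fun j => ‖rotProj U (coordProj D s) α j‖ ^ 2)
      (fun _ _ => by positivity) (Finset.mem_erase.2 ⟨h.symm, Finset.mem_univ β⟩)
  linarith

lemma entry_integrable {D : ℕ} (s : Finset (Fin D)) (α β : Fin D) (hαβ : α ≠ β) (c : ℝ)
    (hc : 0 < c) (μ : Measure (UG D)) [IsProbabilityMeasure μ] :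
    Integrable (fun U => Real.exp (c * ‖rotProj U (coordProj D s) α β‖ ^ 2)) μ := by
  have := rotProj_continuous (coordProj D s) α β
  refine Integrable.of_bound (Continuous.aestronglyMeasurable (by fun_prop)) (Real.exp (c * 1))
    (Eventually.of_forall fun U => ?_)
  rw [Real.norm_eq_abs, Real.abs_exp]
  gcongr
  exact entry_le s α β hαβ U

lemma basis_unitary {D : ℕ} (φ : Fin D → Fin D → ℂ)
    (hφ : ∀ α β, dotc (φ α) (φ β) = if α = β then 1 else 0) :
    ∃ V : UG D, ∀ (U : UG D) (P : Matrix (Fin D) (Fin D) ℂ) (α β : Fin D),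
      dotc (φ α) ((rotProj U P).mulVec (φ β)) = rotProj (V * U) P α β := by
  set M : Matrix (Fin D) (Fin D) ℂ := Matrix.of fun α i => (starRingEnd ℂ) (φ α i) with hM
  have hMM : M * star M = 1 := by
    ext α β
    rw [Matrix.mul_apply, Matrix.one_apply, ← hφ α β, dotc]
    refine Finset.sum_congr rfl fun i _ => ?_
    simp [hM, Matrix.star_apply]
  refine ⟨⟨M, Matrix.mem_unitaryGroup_iff.2 hMM⟩, fun U P α β => ?_⟩
  rw [rotProj_mul, Matrix.mul_assoc, Matrix.mul_apply, dotc]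
  refine Finset.sum_congr rfl fun i _ => ?_
  rw [Matrix.mul_apply, Matrix.mulVec, dotProduct]
  simp [hM, Matrix.star_apply]

lemma final_ineq (D : ℕ) (hD : 11 ≤ D) :
    Real.log (4 * (D : ℝ) ^ 2) / (3 * ((D : ℝ) - 1)) < Real.log D / D := by
  have hD' : (11 : ℝ) ≤ D := by exact_mod_cast hD
  have h1 : Real.log (4 * (D : ℝ) ^ 2) = 2 * Real.log 2 + 2 * Real.log D := by
    rw [Real.log_mul (by norm_num) (by positivity), Real.log_pow,
      show (4 : ℝ) = 2 ^ 2 by norm_num, Real.log_pow]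
    norm_num
  have h2 : 3 * Real.log 2 ≤ Real.log D := by
    have : Real.log (2 ^ 3) ≤ Real.log D := Real.log_le_log (by norm_num) (by linarith)
    rw [Real.log_pow] at this
    exact_mod_cast this
  have h3 : 0 < Real.log 2 := Real.log_pos (by norm_num)
  rw [h1, div_lt_div_iff₀ (by linarith) (by linarith)]
  nlinarith

theorem stmt19 (D d : ℕ) (hd : 3 < d) (hD : 2 * d + 2 < D)
    (hlog : Real.log D / D < 1 / 5)
    (φ : Fin D → Fin D → ℂ) (hφ : ∀ α β, dotc (φ α) (φ β) = if α = β then 1 else 0)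
    (s : Finset (Fin D)) (hs : s.card = d)
    (μ : Measure (UG D)) [μ.IsHaarMeasure] [IsProbabilityMeasure μ] :
    (∫ U, (⨆ α, ⨆ β, ⨆ _ : α ≠ β,
        ‖dotc (φ α) ((rotProj U (coordProj D s)).mulVec (φ β))‖ ^ 2) ∂μ)
      < Real.log D / D := by
  have hD11 : 11 ≤ D := by omega
  have hD' : (11 : ℝ) ≤ D := by exact_mod_cast hD11
  obtain ⟨V, hV⟩ := basis_unitary φ hφ
  refine lt_of_le_of_lt ?_ (final_ineq D hD11)
  simp only [hV]
  set c : ℝ := 3 * ((D : ℝ) - 1) with hc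
  set K : ℝ := 4 * (D : ℝ) ^ 2 with hK
  have hc0 : 0 < c := by rw [hc]; linarith
  have hK0 : 0 < K := by rw [hK]; positivity
  have hlogK : 1 ≤ Real.log K := by
    rw [Real.le_log_iff_exp_le hK0, hK]
    have := Real.exp_one_lt_d9
    nlinarith
  set E : Fin D × Fin D → UG D → ℝ :=
    fun p U => Real.exp (c * ‖rotProj U (coordProj D s) p.1 p.2‖ ^ 2) with hE
  set O : Finset (Fin D × Fin D) := Finset.univ.filter fun p => p.1 ≠ p.2 with hO
  have hEi : ∀ p ∈ O, Integrable (E p) μ := fun p hp =>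
    entry_integrable s p.1 p.2 (by simpa [hO] using hp) c hc0 μ
  set G : UG D → ℝ := fun U => ((∑ p ∈ O, E p U) / K + (Real.log K - 1)) / c with hG
  have hsum : Integrable (fun U => ∑ p ∈ O, E p U) μ := integrable_finsetSum _ hEi
  have hGi : Integrable G μ := ((hsum.div_const K).add (integrable_const _)).div_const c
  have hG0 : ∀ U, 0 ≤ G U := fun U => by
    have : 0 ≤ ∑ p ∈ O, E p U := Finset.sum_nonneg fun p _ => (Real.exp_pos _).le
    have h2 : 0 ≤ Real.log K - 1 := by linarith
    simp only [hG]; positivity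
  have hle : ∀ U, ∀ α β, α ≠ β → ‖rotProj U (coordProj D s) α β‖ ^ 2 ≤ G U := by
    intro U α β hαβ
    have h1 : E (α, β) U ≤ ∑ p ∈ O, E p U :=
      Finset.single_le_sum (f := fun p => E p U) (fun p _ => (Real.exp_pos _).le)
        (by simpa [hO] using hαβ)
    have h2 := Real.add_one_le_exp (c * ‖rotProj U (coordProj D s) α β‖ ^ 2 - Real.log K)
    rw [Real.exp_sub, Real.exp_log hK0] at h2
    have h3 : E (α, β) U / K ≤ (∑ p ∈ O, E p U) / K := by gcongr
    simp only [hG]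
    rw [le_div_iff₀ hc0]
    simp only [hE] at h3 ⊢
    linarith
  have hmain : ∫ U, G U ∂μ ≤ Real.log K / c := by
    simp only [hG]
    rw [integral_div, integral_add (hsum.div_const K) (integrable_const _), integral_div,
      integral_finsetSum _ hEi, integral_const]
    have h4 : ∑ p ∈ O, ∫ U, E p U ∂μ ≤ K := by
      refine (Finset.sum_le_card_nsmul O _ 4 fun p hp =>
        entry_mgf (by omega) s p.1 p.2 (by simpa [hO] using hp) μ).trans ?_
      have : (O.card : ℝ) ≤ (D : ℝ) ^ 2 := by
        have := Finset.card_le_univ O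
        simp only [Fintype.card_prod, Fintype.card_fin] at this
        rw [sq]; exact_mod_cast this
      rw [nsmul_eq_mul, hK]; linarith
    have h5 : (∑ p ∈ O, ∫ U, E p U ∂μ) / K ≤ 1 := (div_le_one hK0).2 h4
    gcongr
    simp only [probReal_univ, one_smul]
    linarith
  refine le_trans ?_ hmain
  rw [← integral_mul_left_eq_self G V]
  refine integral_mono_of_nonneg (Eventually.of_forall fun U => ?_) (hGi.comp_mul_left V)
    (Eventually.of_forall fun U => ?_)
  · exact Real.iSup_nonneg fun α => Real.iSup_nonneg fun β => Real.iSup_nonneg fun _ => by positivity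
  · exact Real.iSup_le (fun α => Real.iSup_le (fun β => Real.iSup_le (fun h => hle _ α β h)
      (hG0 _)) (hG0 _)) (hG0 _)
end
end
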